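/- Let (Ω, 𝒜, μ) be a σ-finite measure space and T₁,…,T_d a commuting family of positive Dunford–Schwartz operators. Then for every f ∈ R_μ and every sequence n(k) ∈ ℕ^d with n(k) → ∞ that remains in a sector of ℕ^d, the averages A_{n(k)}(f) converge almost uniformly as k → ∞ to some f̂ ∈ R_μ. -/

import Mathlib

open MeasureTheory Filter Set ENNReal Topology

variable {Ω : Type*} [MeasurableSpace Ω]

/-- `f` belongs to `L¹(μ) + L^∞(μ)`. -/
def MemL1pLinf (μ : Measure Ω) (f : Ω →ₘ[μ] ℝ) : Prop :=
  ∃ g h : Ω →ₘ[μ] ℝ, eLpNorm g 1 μ ≠ ∞ ∧ eLpNorm h ⊤ μ ≠ ∞ ∧ f = g + h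

/-- A positive Dunford–Schwartz operator: linear and positive on `L¹+L^∞`,
contracting both the `L¹`- and `L^∞`-norms. -/
structure IsPosDS (μ : Measure Ω) (T : (Ω →ₘ[μ] ℝ) → (Ω →ₘ[μ] ℝ)) : Prop where
  map_add : ∀ f g, MemL1pLinf μ f → MemL1pLinf μ g → T (f + g) = T f + T g
  map_smul : ∀ (c : ℝ) (f), MemL1pLinf μ f → T (c • f) = c • T f
  map_pos : ∀ f, MemL1pLinf μ f → 0 ≤ f → 0 ≤ T f
  norm_one : ∀ f, MemL1pLinf μ f → eLpNorm (T f) 1 μ ≤ eLpNorm f 1 μ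
  norm_top : ∀ f, MemL1pLinf μ f → eLpNorm (T f) ⊤ μ ≤ eLpNorm f ⊤ μ

/-- The Cesàro averages `A_n(f) = (1/n) ∑_{k<n} T^k f`. -/
noncomputable def cesaro (μ : Measure Ω) (T : (Ω →ₘ[μ] ℝ) → (Ω →ₘ[μ] ℝ)) (n : ℕ)
    (f : Ω →ₘ[μ] ℝ) : Ω →ₘ[μ] ℝ :=
  (n : ℝ)⁻¹ • ∑ k ∈ Finset.range n, T^[k] f

/-- Almost uniform convergence of a net `F` to `f`. -/
def AuTendsto {ι : Type*} (μ : Measure Ω) (l : Filter ι) (F : ι → Ω →ₘ[μ] ℝ)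
    (f : Ω →ₘ[μ] ℝ) : Prop :=
  ∀ ε : ℝ, 0 < ε → ∃ E : Set Ω, MeasurableSet E ∧ μ Eᶜ ≤ ENNReal.ofReal ε ∧
    Tendsto (fun i => eLpNorm (E.indicator (⇑(F i - f))) ⊤ μ) l (𝓝 0)

/-- `R_μ`: elements of `L¹+L^∞` whose distribution tails are finite. -/
def MemRmu (μ : Measure Ω) (f : Ω →ₘ[μ] ℝ) : Prop :=
  MemL1pLinf μ f ∧ ∀ lam : ℝ, 0 < lam → μ {ω | lam < |f ω|} < ∞

/-- `T₁^{k₁} ∘ ⋯ ∘ T_d^{k_d}` for a family `T` of operators. -/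
def iterComp {E : Type*} {d : ℕ} (T : Fin d → E → E) (k : Fin d → ℕ) : E → E :=
  (List.ofFn fun i => (T i)^[k i]).foldr (· ∘ ·) id

/-- The multiparameter averages
`A_n(f) = (n₁⋯n_d)⁻¹ ∑_{i₁<n₁} ⋯ ∑_{i_d<n_d} T₁^{i₁}⋯T_d^{i_d} f`. -/
noncomputable def multiAvg (μ : Measure Ω) {d : ℕ}
    (T : Fin d → (Ω →ₘ[μ] ℝ) → (Ω →ₘ[μ] ℝ)) (n : Fin d → ℕ)
    (f : Ω →ₘ[μ] ℝ) : Ω →ₘ[μ] ℝ :=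
  (∏ i, (n i : ℝ))⁻¹ •
    ∑ k ∈ Fintype.piFinset (fun i => Finset.range (n i)), iterComp T k f

/-- A sequence `n(k) ∈ ℕ^d` remains in a sector of `ℕ^d`. -/
def InSector {d : ℕ} (n : ℕ → Fin d → ℕ) : Prop :=
  ∃ c₀ : ℝ, ∀ k, ∀ i j, n k j ≠ 0 → (n k i : ℝ) / (n k j : ℝ) ≤ c₀

/-!
Brunel's series `ψ(X) = (1 - √(1 - X)) / X` has nonnegative coefficients of sum one, and the
coefficients of its powers are large enough that, for commuting positive contractions `S` and `T`,
the product of the Cesàro means of length `n` is dominated by a constant times the Cesàro mean of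
length about `√n` of the single positive contraction `ψ(S) ψ(T)`. Iterating, any finitely many of
the averages over a sector are dominated by Cesàro means of one positive contraction `U`, so that
Hopf's maximal ergodic inequality for `U` yields a maximal inequality for them. By Banach's
principle, the functions along which the averages are almost uniformly Cauchy are then closed under
approximation. In `L²`, the functions fixed by all `T_i` and the coboundaries `g - T_i g` span a
dense subspace, and their averages clearly converge when `g` is bounded; a function in `R_μ` is
approximated by square-integrable ones up to a small `L¹`-excess over any level `δ > 0`. Fatou's
lemma finally puts the limit back into `R_μ`.
-/

section BrunelCoefficients

open PowerSeries in
/-- Brunel's power series `ψ(X) = (1 - √(1 - X)) / X = ½ C(X / 4)`, where `C` is the generating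
function of the Catalan numbers. -/
noncomputable def brunelSeries : PowerSeries ℝ :=
  C (1 / 2) * rescale (1 / 4) (PowerSeries.map (Nat.castRingHom ℝ) catalanSeries)

/-- `brunelCoeff k m` is the coefficient of `X ^ k` in `ψ ^ m`. -/
noncomputable def brunelCoeff (k m : ℕ) : ℝ := PowerSeries.coeff k (brunelSeries ^ m)

open PowerSeries in
lemma brunelSeries_eq : brunelSeries = C (1 / 2) + C (1 / 2) * (X * brunelSeries ^ 2) := by
  have h := congrArg (fun p => rescale (1 / 4 : ℝ) (PowerSeries.map (Nat.castRingHom ℝ) p))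
    catalanSeries_sq_mul_X_add_one
  simp only [map_add, map_mul, map_pow, map_X, map_one, rescale_X] at h
  have quarter : (C (1 / 4 : ℝ)) = C (1 / 2) ^ 2 := by rw [← map_pow]; norm_num
  rw [quarter] at h
  unfold brunelSeries
  linear_combination -(C (1 / 2 : ℝ)) * h

lemma brunelCoeff_succ_zero (k : ℕ) : brunelCoeff (k + 1) 0 = 0 := by
  simp [brunelCoeff, PowerSeries.coeff_one]

lemma brunelCoeff_one_eq_catalan (k : ℕ) : brunelCoeff k 1 = catalan k / 2 ^ (2 * k + 1) := by
  simp only [brunelCoeff, pow_one, brunelSeries, PowerSeries.coeff_C_mul, PowerSeries.coeff_rescale,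
    PowerSeries.coeff_map, PowerSeries.catalanSeries_coeff, Nat.coe_castRingHom]
  rw [pow_succ, pow_mul, one_div_pow]
  norm_num
  ring

lemma brunelCoeff_add_two (k m : ℕ) :
    brunelCoeff k (m + 2) = 2 * brunelCoeff (k + 1) (m + 1) - brunelCoeff (k + 1) m := by
  have h : brunelSeries ^ (m + 1) = PowerSeries.C (1 / 2) * brunelSeries ^ m
      + PowerSeries.C (1 / 2) * (PowerSeries.X * brunelSeries ^ (m + 2)) := by
    linear_combination brunelSeries ^ m * brunelSeries_eq
  have := congrArg (PowerSeries.coeff (k + 1)) h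
  simp only [map_add, PowerSeries.coeff_C_mul, PowerSeries.coeff_succ_X_mul] at this
  simp only [brunelCoeff]
  linarith

lemma brunelCoeff_one (k : ℕ) :
    brunelCoeff k 1 = (k.centralBinom : ℝ) / 4 ^ k / (2 * (k + 1)) := by
  have h : (k.centralBinom : ℝ) = (k + 1) * catalan k := by
    exact_mod_cast (succ_mul_catalan_eq_centralBinom k).symm
  rw [brunelCoeff_one_eq_catalan, h, pow_succ, pow_mul]
  norm_num
  field_simp

lemma cast_centralBinom_eq_factorial (k : ℕ) :
    (k.centralBinom : ℝ) = (2 * k).factorial / (k.factorial * k.factorial) := by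
  rw [Nat.centralBinom_eq_two_mul_choose, Nat.cast_choose ℝ (by lia), show 2 * k - k = k by lia]

lemma brunelCoeff_succ (m k : ℕ) :
    brunelCoeff k (m + 1) =
      (m + 1) * (2 * k + m).factorial / (k.factorial * (k + m + 1).factorial)
        / 2 ^ (2 * k + m + 1) := by
  induction m using Nat.twoStepInduction generalizing k with
  | zero =>
    rw [zero_add, brunelCoeff_one, add_zero, add_zero, cast_centralBinom_eq_factorial,
      Nat.factorial_succ, pow_succ, pow_mul]
    norm_num
    field_simp
  | one =>
    rw [brunelCoeff_add_two, brunelCoeff_succ_zero, zero_add, brunelCoeff_one,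
      cast_centralBinom_eq_factorial, show 2 * (k + 1) = 2 * k + 1 + 1 by ring,
      Nat.factorial_succ (2 * k + 1), Nat.factorial_succ k, Nat.factorial_succ (k + 1),
      Nat.factorial_succ k, pow_succ, pow_succ, pow_succ, pow_mul]
    push_cast
    field_simp
    norm_num
    ring
  | more m ih₀ ih₁ =>
    rw [brunelCoeff_add_two, ih₁, ih₀,
      show 2 * (k + 1) + (m + 1) = 2 * k + m + 2 + 1 by ring,
      show 2 * (k + 1) + m = 2 * k + m + 2 by ring,
      show 2 * k + (m + 2) = 2 * k + m + 2 by ring,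
      show k + 1 + (m + 1) + 1 = k + m + 2 + 1 by ring,
      show k + 1 + m + 1 = k + m + 2 by ring,
      show k + (m + 2) + 1 = k + m + 2 + 1 by ring,
      Nat.factorial_succ (2 * k + m + 2), Nat.factorial_succ k, Nat.factorial_succ (k + m + 2),
      pow_succ (2 : ℝ) (2 * k + m + 2 + 1)]
    push_cast
    field_simp
    ring

lemma brunelCoeff_nonneg (k m : ℕ) : 0 ≤ brunelCoeff k m := by
  rcases m with _ | m
  · rw [brunelCoeff, pow_zero, PowerSeries.coeff_one]
    split_ifs <;> norm_num
  · rw [brunelCoeff_succ]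
    positivity

lemma cast_centralBinom_succ (k : ℕ) :
    ((k + 1).centralBinom : ℝ) = 2 * (2 * k + 1) / (k + 1) * k.centralBinom := by
  have h : ((k : ℝ) + 1) * (k + 1).centralBinom = 2 * (2 * k + 1) * k.centralBinom := by
    exact_mod_cast Nat.succ_mul_centralBinom_succ k
  field_simp
  linarith

lemma sum_brunelCoeff_one (M : ℕ) :
    ∑ k ∈ Finset.range M, brunelCoeff k 1 = 1 - (M.centralBinom : ℝ) / 4 ^ M := by
  induction M with
  | zero => simp
  | succ M ih =>
    rw [Finset.sum_range_succ, ih, brunelCoeff_one, cast_centralBinom_succ, pow_succ]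
    field_simp
    ring

lemma sum_brunelCoeff_one_le_one (M : ℕ) : ∑ k ∈ Finset.range M, brunelCoeff k 1 ≤ 1 := by
  rw [sum_brunelCoeff_one, sub_le_self_iff]
  positivity

lemma four_pow_sq_le_mul_centralBinom_sq (k : ℕ) :
    ((4 : ℝ) ^ k) ^ 2 ≤ (4 * k + 1) * (k.centralBinom : ℝ) ^ 2 := by
  induction k with
  | zero => simp
  | succ k ih =>
    rw [cast_centralBinom_succ, pow_succ (4 : ℝ), mul_pow, mul_pow, div_pow, ← mul_assoc]
    calc ((4 : ℝ) ^ k) ^ 2 * 4 ^ 2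
        ≤ (4 * k + 1) * (k.centralBinom : ℝ) ^ 2 * 4 ^ 2 := by gcongr
      _ = 16 * (4 * k + 1) * (k.centralBinom : ℝ) ^ 2 := by ring
      _ ≤ _ := by
        refine mul_le_mul_of_nonneg_right ?_ (sq_nonneg _)
        rw [← mul_div_assoc, le_div_iff₀ (by positivity)]
        push_cast
        nlinarith

lemma inv_two_sqrt_le_centralBinom_div (k : ℕ) :
    1 / (2 * √(k + 1)) ≤ (k.centralBinom : ℝ) / 4 ^ k := by
  rw [div_le_div_iff₀ (by positivity) (by positivity), one_mul]
  refine le_of_sq_le_sq ?_ (by positivity)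
  rw [mul_pow, mul_pow, Real.sq_sqrt (by positivity)]
  nlinarith [four_pow_sq_le_mul_centralBinom_sq k, sq_nonneg (k.centralBinom : ℝ)]

lemma le_brunelCoeff_one (k : ℕ) : 1 / (4 * ((k + 1) * √(k + 1))) ≤ brunelCoeff k 1 := by
  rw [brunelCoeff_one, le_div_iff₀ (by positivity)]
  refine le_of_eq_of_le ?_ (inv_two_sqrt_le_centralBinom_div k)
  field_simp
  norm_num

lemma brunelCoeff_add_two_div (k m : ℕ) :
    brunelCoeff k (m + 2) / (m + 2) =
      brunelCoeff k (m + 1) / (m + 1) * (1 - (m + 3) / (2 * (k + m + 2))) := by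
  rw [brunelCoeff_succ, brunelCoeff_succ,
    show 2 * k + (m + 1) = 2 * k + m + 1 by ring, show k + (m + 1) + 1 = k + m + 1 + 1 by ring,
    pow_succ (2 : ℝ) (2 * k + m + 1), Nat.factorial_succ (2 * k + m),
    Nat.factorial_succ (k + m + 1)]
  push_cast
  field_simp
  ring

lemma brunelCoeff_one_mul_le (k m : ℕ) (hm : (m + 1) ^ 2 ≤ k + 1) :
    brunelCoeff k 1 * (1 - m * (m + 5) / (4 * (k + 2))) ≤ brunelCoeff k (m + 1) / (m + 1) := by
  induction m with
  | zero => simp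
  | succ m ih =>
    set x : ℝ := m * (m + 5) / (4 * (k + 2))
    set y : ℝ := (2 * m + 6) / (4 * (k + 2))
    have hmk : ((m : ℝ) + 1 + 1) ^ 2 ≤ k + 1 := by exact_mod_cast hm
    have hx : 0 ≤ x := by positivity
    have hy : 0 ≤ y := by positivity
    have hy1 : y ≤ 1 := by
      rw [div_le_one (by positivity)]
      nlinarith
    have ratio_le : ((m : ℝ) + 3) / (2 * (k + m + 2)) ≤ y := by
      rw [div_le_div_iff₀ (by positivity) (by positivity)]
      nlinarith [mul_nonneg m.cast_nonneg (k.cast_nonneg (α := ℝ)),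
        mul_nonneg m.cast_nonneg (m.cast_nonneg (α := ℝ))]
    calc brunelCoeff k 1 * (1 - (m + 1 : ℕ) * ((m + 1 : ℕ) + 5) / (4 * (k + 2)))
        = brunelCoeff k 1 * (1 - x - y) := by simp only [x, y]; push_cast; ring
      _ ≤ brunelCoeff k 1 * ((1 - x) * (1 - y)) := by
        gcongr
        · exact brunelCoeff_nonneg k 1
        · nlinarith [mul_nonneg hx hy]
      _ = brunelCoeff k 1 * (1 - x) * (1 - y) := by ring
      _ ≤ brunelCoeff k (m + 1) / (m + 1) * (1 - y) := by
        gcongr ?_ * _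
        exact ih (le_trans (by gcongr; lia) hm)
      _ ≤ brunelCoeff k (m + 1) / (m + 1) * (1 - (m + 3) / (2 * (k + m + 2))) := by
        gcongr
        exact div_nonneg (brunelCoeff_nonneg k _) (by positivity)
      _ = _ := by
        rw [← brunelCoeff_add_two_div]
        push_cast
        ring_nf

lemma le_brunelCoeff_succ (k m : ℕ) (hm : (m + 1) ^ 2 ≤ k + 1) :
    ((m : ℝ) + 1) / (8 * ((k + 1) * √(k + 1))) ≤ brunelCoeff k (m + 1) := by
  have hmk : ((m : ℝ) + 1) ^ 2 ≤ k + 1 := by exact_mod_cast hm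
  have half : (m : ℝ) * (m + 5) / (4 * (k + 2)) ≤ 1 / 2 := by
    rw [div_le_iff₀ (by positivity)]
    nlinarith [sq_nonneg ((m : ℝ) - 1)]
  calc ((m : ℝ) + 1) / (8 * ((k + 1) * √(k + 1)))
      = 1 / (4 * ((k + 1) * √(k + 1))) * (1 - 1 / 2) * (m + 1) := by field_simp; norm_num
    _ ≤ brunelCoeff k 1 * (1 - m * (m + 5) / (4 * (k + 2))) * (m + 1) := by
      gcongr
      · exact brunelCoeff_nonneg k 1
      · exact le_brunelCoeff_one k
    _ ≤ brunelCoeff k (m + 1) := by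
      rw [← le_div_iff₀ (by positivity)]
      exact brunelCoeff_one_mul_le k m hm

lemma cube_div_three_le_sum_sq (q : ℕ) :
    (q : ℝ) ^ 3 / 3 ≤ ∑ m ∈ Finset.range q, ((m : ℝ) + 1) ^ 2 := by
  induction q with
  | zero => simp
  | succ q ih =>
    rw [Finset.sum_range_succ]
    push_cast
    nlinarith [q.cast_nonneg (α := ℝ)]

lemma sqrt_succ_le_two_mul_natSqrt (i : ℕ) : √(i + 1) ≤ 2 * (i + 1).sqrt := by
  have lt : (i : ℝ) + 1 < ((i + 1).sqrt + 1) ^ 2 := by exact_mod_cast Nat.lt_succ_sqrt' (i + 1)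
  have one_le : (1 : ℝ) ≤ (i + 1).sqrt := by exact_mod_cast Nat.sqrt_pos.2 i.succ_pos
  rw [Real.sqrt_le_left (by positivity)]
  nlinarith

-- `brunelCoeff k m` is of order `m k ^ (-3 / 2)` for `m ≤ √k`, and the sum of `m ^ 2` over `m ≤ √i`
-- is of order `i ^ (3 / 2)`.
lemma le_sum_brunelCoeff_succ_mul {i j : ℕ} (hij : i ≤ j) :
    1 / (1536 * ((j + 1) * √(j + 1))) ≤
      ∑ m ∈ Finset.range (i + 1).sqrt, brunelCoeff i (m + 1) * brunelCoeff j (m + 1) := by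
  set q := (i + 1).sqrt
  calc 1 / (1536 * ((j + 1) * √(j + 1)))
      = √(i + 1) ^ 3 / 24
          * (1 / (8 * ((i + 1) * √(i + 1))) * (1 / (8 * ((j + 1) * √(j + 1))))) := by
        rw [← Real.sq_sqrt (show (0 : ℝ) ≤ i + 1 by positivity)]
        simp only [Real.sqrt_sq (Real.sqrt_nonneg _)]
        field_simp
        norm_num
    _ ≤ (2 * q) ^ 3 / 24
          * (1 / (8 * ((i + 1) * √(i + 1))) * (1 / (8 * ((j + 1) * √(j + 1))))) := by
        gcongr
        exact sqrt_succ_le_two_mul_natSqrt i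
    _ ≤ (∑ m ∈ Finset.range q, ((m : ℝ) + 1) ^ 2)
          * (1 / (8 * ((i + 1) * √(i + 1))) * (1 / (8 * ((j + 1) * √(j + 1))))) := by
        gcongr
        linarith [cube_div_three_le_sum_sq q]
    _ = ∑ m ∈ Finset.range q, ((m : ℝ) + 1) / (8 * ((i + 1) * √(i + 1)))
          * ((m + 1) / (8 * ((j + 1) * √(j + 1)))) := by
        rw [Finset.sum_mul]
        exact Finset.sum_congr rfl fun m _ => by ring
    _ ≤ _ := by
        refine Finset.sum_le_sum fun m hm => ?_
        have hmi : (m + 1) ^ 2 ≤ i + 1 :=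
          (Nat.pow_le_pow_left (Finset.mem_range.1 hm) 2).trans (Nat.sqrt_le' _)
        gcongr
        · exact brunelCoeff_nonneg _ _
        · exact le_brunelCoeff_succ i m hmi
        · exact le_brunelCoeff_succ j m (hmi.trans (by lia))

lemma le_sum_brunelCoeff_mul {i j n : ℕ} (hi : i < n) (hj : j < n) :
    1 / (1536 * (n * √n)) ≤
      ∑ m ∈ Finset.range (n.sqrt + 1), brunelCoeff i m * brunelCoeff j m := by
  wlog hij : i ≤ j generalizing i j
  · simpa only [mul_comm] using this hj hi (le_of_not_ge hij)
  have hjn : (j : ℝ) + 1 ≤ n := by exact_mod_cast hj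
  calc 1 / (1536 * (n * √n)) ≤ 1 / (1536 * ((j + 1) * √(j + 1))) := by gcongr
    _ ≤ ∑ m ∈ Finset.range (i + 1).sqrt, brunelCoeff i (m + 1) * brunelCoeff j (m + 1) :=
      le_sum_brunelCoeff_succ_mul hij
    _ ≤ ∑ m ∈ Finset.range n.sqrt, brunelCoeff i (m + 1) * brunelCoeff j (m + 1) :=
      Finset.sum_le_sum_of_subset_of_nonneg
        (Finset.range_subset_range.2 (Nat.sqrt_le_sqrt hi))
        fun _ _ _ => mul_nonneg (brunelCoeff_nonneg _ _) (brunelCoeff_nonneg _ _)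
    _ ≤ _ := by
      rw [Finset.sum_range_succ']
      exact le_add_of_nonneg_right (mul_nonneg (brunelCoeff_nonneg _ _) (brunelCoeff_nonneg _ _))

end BrunelCoefficients

section BrunelDomination

/-- The Cesàro mean `n⁻¹ ∑_{k < n} a ^ k` of the powers of `a`. It is `0` for `n = 0`. -/
noncomputable def powAvg {A : Type*} [Ring A] [Algebra ℝ A] (n : ℕ) (a : A) : A :=
  (n : ℝ)⁻¹ • ∑ k ∈ Finset.range n, a ^ k

variable {A : Type*} [CommRing A] [Algebra ℝ A]

/-- Brunel's series `ψ`, truncated below degree `M` and evaluated at `a`. -/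
noncomputable def brunelSum (M : ℕ) (a : A) : A :=
  ∑ k ∈ Finset.range M, brunelCoeff k 1 • a ^ k

lemma powAvg_zero {A : Type*} [Ring A] [Algebra ℝ A] (a : A) : powAvg 0 a = 0 := by
  simp [powAvg]

lemma powAvg_one {n : ℕ} (hn : n ≠ 0) : powAvg n (1 : A) = 1 := by
  have : (n : ℝ) ≠ 0 := Nat.cast_ne_zero.2 hn
  simp only [powAvg, one_pow, Finset.sum_const, Finset.card_range]
  rw [← Nat.cast_smul_eq_nsmul ℝ, inv_smul_smul₀ this]

lemma coeff_trunc_brunelSeries_pow_nonneg (M m k : ℕ) :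
    0 ≤ ((PowerSeries.trunc M brunelSeries) ^ m).coeff k := by
  induction m generalizing k with
  | zero =>
    rw [pow_zero, Polynomial.coeff_one]
    split_ifs <;> norm_num
  | succ m ih =>
    rw [pow_succ, Polynomial.coeff_mul]
    refine Finset.sum_nonneg fun x _ => mul_nonneg (ih _) ?_
    rw [PowerSeries.coeff_trunc]
    split_ifs
    · simpa [brunelCoeff] using brunelCoeff_nonneg x.2 1
    · exact le_rfl

lemma coeff_trunc_brunelSeries_pow {M k : ℕ} (m : ℕ) (hk : k < M) :
    ((PowerSeries.trunc M brunelSeries) ^ m).coeff k = brunelCoeff k m := by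
  have h := congrArg (fun p => p.coeff k) (PowerSeries.trunc_trunc_pow brunelSeries M m)
  simp only [PowerSeries.coeff_trunc, if_pos hk] at h
  rw [brunelCoeff, ← h, ← Polynomial.coe_pow, Polynomial.coeff_coe]

lemma brunelSum_eq_aeval (M : ℕ) (a : A) :
    brunelSum M a = Polynomial.aeval a (PowerSeries.trunc M brunelSeries) := by
  rw [Polynomial.aeval_def, PowerSeries.eval₂_trunc_eq_sum_range, brunelSum]
  simp only [brunelCoeff, pow_one, Algebra.smul_def]

variable [PartialOrder A] [IsOrderedRing A] [IsOrderedModule ℝ A]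

lemma powAvg_nonneg {a : A} (ha : 0 ≤ a) (n : ℕ) : 0 ≤ powAvg n a :=
  smul_nonneg (by positivity) (Finset.sum_nonneg fun _ _ => pow_nonneg ha _)

lemma brunelSum_nonneg {a : A} (ha : 0 ≤ a) (M : ℕ) : 0 ≤ brunelSum M a :=
  Finset.sum_nonneg fun k _ => smul_nonneg (brunelCoeff_nonneg k 1) (pow_nonneg ha k)

lemma sum_brunelCoeff_smul_pow_le {a : A} (ha : 0 ≤ a) {n M : ℕ} (hn : n ≤ M) (m : ℕ) :
    ∑ k ∈ Finset.range n, brunelCoeff k m • a ^ k ≤ brunelSum M a ^ m := by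
  set p := PowerSeries.trunc M brunelSeries ^ m with hp
  calc ∑ k ∈ Finset.range n, brunelCoeff k m • a ^ k
      = ∑ k ∈ Finset.range n, p.coeff k • a ^ k := by
        refine Finset.sum_congr rfl fun k hk => ?_
        rw [hp, coeff_trunc_brunelSeries_pow m ((Finset.mem_range.1 hk).trans_le hn)]
    _ ≤ ∑ k ∈ Finset.range (n + (p.natDegree + 1)), p.coeff k • a ^ k :=
        Finset.sum_le_sum_of_subset_of_nonneg (Finset.range_subset_range.2 (Nat.le_add_right _ _))
          fun k _ _ => smul_nonneg (coeff_trunc_brunelSeries_pow_nonneg M m k) (pow_nonneg ha k)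
    _ = brunelSum M a ^ m := by
        rw [← Polynomial.aeval_eq_sum_range' (by lia), hp, map_pow, brunelSum_eq_aeval]

lemma smul_sum_pow_mul_sum_pow_le {a b : A} (ha : 0 ≤ a) (hb : 0 ≤ b) {n M : ℕ} (hn : n ≤ M) :
    (1 / (1536 * (n * √n))) • ((∑ i ∈ Finset.range n, a ^ i) * ∑ j ∈ Finset.range n, b ^ j) ≤
      ∑ m ∈ Finset.range (n.sqrt + 1), (brunelSum M a * brunelSum M b) ^ m := by
  calc (1 / (1536 * (n * √n))) • ((∑ i ∈ Finset.range n, a ^ i) * ∑ j ∈ Finset.range n, b ^ j)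
      = ∑ i ∈ Finset.range n, ∑ j ∈ Finset.range n, (1 / (1536 * (n * √n))) • (a ^ i * b ^ j) := by
        simp_rw [Finset.sum_mul_sum, Finset.smul_sum]
    _ ≤ ∑ i ∈ Finset.range n, ∑ j ∈ Finset.range n,
          (∑ m ∈ Finset.range (n.sqrt + 1), brunelCoeff i m * brunelCoeff j m) •
            (a ^ i * b ^ j) := by
        refine Finset.sum_le_sum fun i hi => Finset.sum_le_sum fun j hj => ?_
        exact smul_le_smul_of_nonneg_right
          (le_sum_brunelCoeff_mul (Finset.mem_range.1 hi) (Finset.mem_range.1 hj))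
          (mul_nonneg (pow_nonneg ha _) (pow_nonneg hb _))
    _ = ∑ m ∈ Finset.range (n.sqrt + 1), (∑ i ∈ Finset.range n, brunelCoeff i m • a ^ i) *
          ∑ j ∈ Finset.range n, brunelCoeff j m • b ^ j := by
        simp_rw [Finset.sum_mul_sum, Finset.sum_smul, smul_mul_smul_comm]
        exact (Finset.sum_congr rfl fun i _ => Finset.sum_comm).trans Finset.sum_comm
    _ ≤ _ := by
        refine Finset.sum_le_sum fun m _ => ?_
        rw [mul_pow]
        refine mul_le_mul (sum_brunelCoeff_smul_pow_le ha hn m)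
          (sum_brunelCoeff_smul_pow_le hb hn m)
          (Finset.sum_nonneg fun k _ => smul_nonneg (brunelCoeff_nonneg k m) (pow_nonneg hb k))
          (pow_nonneg (brunelSum_nonneg ha M) m)

lemma powAvg_mul_powAvg_le {a b : A} (ha : 0 ≤ a) (hb : 0 ≤ b) {n M : ℕ} (hnM : n ≤ M) :
    powAvg n a * powAvg n b ≤
      (3072 : ℝ) • powAvg (n.sqrt + 1) (brunelSum M a * brunelSum M b) := by
  rcases n.eq_zero_or_pos with rfl | hn
  · rw [powAvg_zero, zero_mul]
    exact smul_nonneg (by norm_num)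
      (powAvg_nonneg (mul_nonneg (brunelSum_nonneg ha M) (brunelSum_nonneg hb M)) _)
  have one_le : 1 ≤ √(n : ℝ) := Real.one_le_sqrt.2 (by exact_mod_cast hn)
  have sq_sqrt : √(n : ℝ) ^ 2 = n := Real.sq_sqrt n.cast_nonneg
  set K : ℝ := 1536 * (√n)⁻¹
  calc powAvg n a * powAvg n b
      = K • (1 / (1536 * (n * √n))) •
          ((∑ i ∈ Finset.range n, a ^ i) * ∑ j ∈ Finset.range n, b ^ j) := by
        rw [powAvg, powAvg, smul_mul_smul_comm, smul_smul]
        congr 1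
        simp only [K]
        rw [← sq_sqrt]
        simp only [Real.sqrt_sq (Real.sqrt_nonneg _)]
        field_simp
    _ ≤ K • ∑ m ∈ Finset.range (n.sqrt + 1), (brunelSum M a * brunelSum M b) ^ m :=
        smul_le_smul_of_nonneg_left (smul_sum_pow_mul_sum_pow_le ha hb hnM) (by positivity)
    _ ≤ (3072 * ((n.sqrt + 1 : ℕ) : ℝ)⁻¹) •
          ∑ m ∈ Finset.range (n.sqrt + 1), (brunelSum M a * brunelSum M b) ^ m := by
        refine smul_le_smul_of_nonneg_right ?_ (Finset.sum_nonneg fun m _ =>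
          pow_nonneg (mul_nonneg (brunelSum_nonneg ha M) (brunelSum_nonneg hb M)) m)
        have : (n.sqrt : ℝ) ≤ √n := Real.nat_sqrt_le_real_sqrt
        simp only [K]
        rw [← div_eq_mul_inv, ← div_eq_mul_inv, div_le_div_iff₀ (by positivity) (by positivity)]
        push_cast
        linarith
    _ = _ := by rw [powAvg, smul_smul]

lemma exists_prod_powAvg_le_of_card_le {ι : Type*} (Q : Submonoid A) (hQ : ∀ a ∈ Q, 0 ≤ a)
    (hψ : ∀ M, ∀ a ∈ Q, brunelSum M a ∈ Q) (r : ℕ) :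
    ∃ (C : ℝ) (N : ℕ → ℕ), 0 ≤ C ∧ ∀ s : Finset ι, s.card ≤ 2 ^ r →
      ∀ t : ι → A, (∀ i ∈ s, t i ∈ Q) → ∀ M, ∃ U ∈ Q, ∀ n ≤ M, n ≠ 0 →
        ∏ i ∈ s, powAvg n (t i) ≤ C • powAvg (N n) U := by
  classical
  induction r with
  | zero =>
    refine ⟨1, id, zero_le_one, fun s hs t ht M => ?_⟩
    rcases s.eq_empty_or_nonempty with rfl | hne
    · exact ⟨1, Q.one_mem, fun n _ hn => by simp [powAvg_one hn]⟩
    · obtain ⟨x, rfl⟩ := Finset.card_eq_one.1 (hs.antisymm hne.card_pos)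
      exact ⟨t x, ht x (Finset.mem_singleton_self x), fun n _ _ => by simp⟩
  | succ r ih =>
    obtain ⟨C, N, hC, ih⟩ := ih
    refine ⟨C * C * 3072, fun n => (N n).sqrt + 1, by positivity, fun s hs t ht M => ?_⟩
    obtain ⟨u, hus, hu⟩ := Finset.exists_subset_card_eq (s := s) (n := s.card / 2) (by lia)
    obtain ⟨U, hUQ, hU⟩ := ih u (by rw [pow_succ] at hs; lia) t (fun i hi => ht i (hus hi)) M
    obtain ⟨V, hVQ, hV⟩ := ih (s \ u) (by rw [pow_succ] at hs; grind [Finset.card_sdiff_of_subset])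
      t (fun i hi => ht i (Finset.sdiff_subset hi)) M
    set M' := (Finset.range (M + 1)).sup N
    refine ⟨brunelSum M' U * brunelSum M' V, Q.mul_mem (hψ _ U hUQ) (hψ _ V hVQ),
      fun n hnM hn => ?_⟩
    have hNM : N n ≤ M' := Finset.le_sup (f := N) (by simp; lia)
    calc ∏ i ∈ s, powAvg n (t i)
        = (∏ i ∈ s \ u, powAvg n (t i)) * ∏ i ∈ u, powAvg n (t i) :=
          (Finset.prod_sdiff hus).symm
      _ ≤ (C • powAvg (N n) V) * (C • powAvg (N n) U) :=
          mul_le_mul (hV n hnM hn) (hU n hnM hn)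
            (Finset.prod_nonneg fun i hi => powAvg_nonneg (hQ _ (ht i (hus hi))) n)
            (smul_nonneg hC (powAvg_nonneg (hQ V hVQ) _))
      _ = (C * C) • (powAvg (N n) U * powAvg (N n) V) := by
          rw [smul_mul_smul_comm, mul_comm (powAvg _ V)]
      _ ≤ (C * C) • (3072 : ℝ) • powAvg ((N n).sqrt + 1) (brunelSum M' U * brunelSum M' V) :=
          smul_le_smul_of_nonneg_left (powAvg_mul_powAvg_le (hQ U hUQ) (hQ V hVQ) hNM)
            (by positivity)
      _ = _ := smul_smul ..

lemma exists_prod_powAvg_le {ι : Type*} [Fintype ι] {Q : Submonoid A} (hQ : ∀ a ∈ Q, 0 ≤ a)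
    (hψ : ∀ M, ∀ a ∈ Q, brunelSum M a ∈ Q) {t : ι → A} (ht : ∀ i, t i ∈ Q) :
    ∃ (C : ℝ) (N : ℕ → ℕ), 0 ≤ C ∧ ∀ M, ∃ U ∈ Q, ∀ n ≤ M, n ≠ 0 →
      ∏ i, powAvg n (t i) ≤ C • powAvg (N n) U := by
  obtain ⟨C, N, hC, h⟩ :=
    exists_prod_powAvg_le_of_card_le (ι := ι) Q hQ hψ (Fintype.card ι)
  exact ⟨C, N, hC, h Finset.univ Nat.lt_two_pow_self.le t fun i _ => ht i⟩

end BrunelDomination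

section Excess

variable {μ : Measure Ω}

/-- The excess `∫ (|f| - δ)⁺ ∂μ` of `f` over the level `δ`: for `0 ≤ δ`, the `L¹`-distance from `f`
to the functions bounded by `δ`. -/
noncomputable def excess (μ : Measure Ω) (δ : ℝ) (f : Ω → ℝ) : ℝ≥0∞ :=
  ∫⁻ x, ENNReal.ofReal (|f x| - δ) ∂μ

lemma excess_zero (f : Ω → ℝ) : excess μ 0 f = eLpNorm f 1 μ := by
  simp only [excess, sub_zero, eLpNorm_one_eq_lintegral_enorm, Real.enorm_eq_ofReal_abs]

lemma excess_le_of_ae {δ ε : ℝ} {f g : Ω → ℝ} (h : ∀ᵐ x ∂μ, |f x| - δ ≤ max (|g x| - ε) 0) :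
    excess μ δ f ≤ excess μ ε g := by
  refine lintegral_mono_ae (h.mono fun x hx => (ENNReal.ofReal_le_ofReal hx).trans_eq ?_)
  rw [ENNReal.ofReal_max, ENNReal.ofReal_zero, max_zero]

lemma excess_anti {δ ε : ℝ} (h : δ ≤ ε) (f : Ω → ℝ) : excess μ ε f ≤ excess μ δ f :=
  excess_le_of_ae (ae_of_all _ fun x => le_max_of_le_left (by linarith))

lemma excess_eq_zero {f : Ω → ℝ} {C : ℝ} (h : ∀ᵐ x ∂μ, |f x| ≤ C) : excess μ C f = 0 :=
  (lintegral_congr_ae (h.mono fun _ hx => ENNReal.ofReal_of_nonpos (sub_nonpos.2 hx))).trans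
    lintegral_zero

lemma eLpNorm_two_sq (f : Ω → ℝ) : eLpNorm f 2 μ ^ 2 = eLpNorm (fun x => f x ^ 2) 1 μ := by
  have h := eLpNorm_norm_rpow (p := 1) (q := 2) (μ := μ) f two_pos
  simpa using h.symm

lemma excess_le_ofReal_inv_mul_eLpNorm_sq {δ : ℝ} (hδ : 0 < δ) (f : Ω → ℝ) :
    excess μ δ f ≤ ENNReal.ofReal δ⁻¹ * eLpNorm f 2 μ ^ 2 := by
  rw [eLpNorm_two_sq, ← excess_zero, excess, excess,
    ← lintegral_const_mul' _ _ ENNReal.ofReal_ne_top]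
  refine lintegral_mono fun x => ?_
  rw [← ENNReal.ofReal_mul (by positivity)]
  refine ENNReal.ofReal_le_ofReal ?_
  rw [sub_zero, abs_sq, inv_mul_eq_div, le_div_iff₀ hδ, ← sq_abs (f x)]
  nlinarith [sq_nonneg (|f x| - δ), abs_nonneg (f x)]

lemma tendsto_excess_atTop {f : Ω → ℝ} (hf : Measurable f) {δ : ℝ} (h : excess μ δ f ≠ ∞) :
    Tendsto (fun C : ℝ => excess μ C f) atTop (𝓝 0) := by
  rw [← lintegral_zero (μ := μ)]
  refine tendsto_lintegral_filter_of_dominated_convergence (fun x => ENNReal.ofReal (|f x| - δ))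
    (Eventually.of_forall fun C => by fun_prop) ?_ h (ae_of_all _ fun x => ?_)
  · filter_upwards [eventually_ge_atTop δ] with C hC
    exact ae_of_all _ fun x => ENNReal.ofReal_le_ofReal (by linarith)
  · refine tendsto_const_nhds.congr' ?_
    filter_upwards [eventually_ge_atTop |f x|] with C hC
    rw [ENNReal.ofReal_of_nonpos (by linarith)]

end Excess

section Clip

variable {μ : Measure Ω}

/-- The truncation `max (-C) (min C f)` of `f` to values in `[-C, C]`. -/
noncomputable def clip (C : ℝ) (f : Ω →ₘ[μ] ℝ) : Ω →ₘ[μ] ℝ :=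
  AEEqFun.comp (fun x : ℝ => max (-C) (min C x)) (by fun_prop) f

lemma coeFn_clip (C : ℝ) (f : Ω →ₘ[μ] ℝ) : ∀ᵐ x ∂μ, clip C f x = max (-C) (min C (f x)) :=
  AEEqFun.coeFn_comp _ _ _

lemma abs_clip_le {C : ℝ} (hC : 0 ≤ C) (f : Ω →ₘ[μ] ℝ) : ∀ᵐ x ∂μ, |clip C f x| ≤ C := by
  filter_upwards [coeFn_clip C f] with x hx
  grind

lemma abs_sub_clip {C : ℝ} (hC : 0 ≤ C) (f : Ω →ₘ[μ] ℝ) :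
    ∀ᵐ x ∂μ, |(f - clip C f) x| = max (|f x| - C) 0 := by
  filter_upwards [coeFn_clip C f, AEEqFun.coeFn_sub f (clip C f)] with x h_clip h_sub
  rw [h_sub, Pi.sub_apply, h_clip]
  grind

lemma eLpNorm_sub_clip {C : ℝ} (hC : 0 ≤ C) (f : Ω →ₘ[μ] ℝ) :
    eLpNorm (f - clip C f : Ω →ₘ[μ] ℝ) 1 μ = excess μ C f := by
  rw [← excess_zero]
  refine lintegral_congr_ae ((abs_sub_clip hC f).mono fun x hx => ?_)
  dsimp only
  rw [hx, sub_zero, ENNReal.ofReal_max, ENNReal.ofReal_zero, max_zero]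

lemma eLpNorm_top_le_ofReal {f : Ω → ℝ} {C : ℝ} (h : ∀ᵐ x ∂μ, |f x| ≤ C) :
    eLpNorm f ∞ μ ≤ ENNReal.ofReal C := by
  rw [eLpNorm_exponent_top]
  exact eLpNormEssSup_le_of_ae_bound h

lemma ae_abs_le_toReal_eLpNorm_top {f : Ω → ℝ} (h : eLpNorm f ∞ μ ≠ ∞) :
    ∀ᵐ x ∂μ, |f x| ≤ (eLpNorm f ∞ μ).toReal := by
  rw [eLpNorm_exponent_top] at h ⊢
  filter_upwards [enorm_ae_le_eLpNormEssSup f μ] with x hx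
  simpa using ENNReal.toReal_mono h hx

lemma memL1pLinf_iff_excess_ne_top {f : Ω →ₘ[μ] ℝ} :
    MemL1pLinf μ f ↔ ∃ δ : ℝ, 0 ≤ δ ∧ excess μ δ f ≠ ∞ := by
  constructor
  · rintro ⟨g, h, hg, hh, rfl⟩
    refine ⟨(eLpNorm h ∞ μ).toReal, ENNReal.toReal_nonneg, ne_top_of_le_ne_top hg ?_⟩
    rw [← excess_zero]
    refine excess_le_of_ae ?_
    filter_upwards [AEEqFun.coeFn_add g h, ae_abs_le_toReal_eLpNorm_top hh] with x h_add h_le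
    rw [h_add, Pi.add_apply]
    exact le_max_of_le_left (by linarith [abs_add_le (g x) (h x)])
  · rintro ⟨δ, hδ, h⟩
    exact ⟨f - clip δ f, clip δ f, by rwa [eLpNorm_sub_clip hδ], ne_top_of_le_ne_top
      ENNReal.ofReal_ne_top (eLpNorm_top_le_ofReal (abs_clip_le hδ f)), (sub_add_cancel _ _).symm⟩

lemma MemL1pLinf.of_abs_le {f g : Ω →ₘ[μ] ℝ} (hg : MemL1pLinf μ g)
    (h : ∀ᵐ x ∂μ, |f x| ≤ |g x|) : MemL1pLinf μ f := by
  rw [memL1pLinf_iff_excess_ne_top] at hg ⊢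
  obtain ⟨δ, hδ, hg⟩ := hg
  exact ⟨δ, hδ, ne_top_of_le_ne_top hg
    (excess_le_of_ae (h.mono fun x hx => le_max_of_le_left (by linarith)))⟩

lemma memRmu_iff_excess_ne_top {f : Ω →ₘ[μ] ℝ} :
    MemRmu μ f ↔ ∀ δ : ℝ, 0 < δ → excess μ δ f ≠ ∞ := by
  refine ⟨fun ⟨hf, htail⟩ δ hδ => ?_, fun h =>
    ⟨memL1pLinf_iff_excess_ne_top.2 ⟨1, zero_le_one, h 1 one_pos⟩, fun δ hδ => ?_⟩⟩
  · obtain ⟨C, -, hfC⟩ := memL1pLinf_iff_excess_ne_top.1 hf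
    have h_tail : MeasurableSet {x | δ < |f x|} := measurableSet_lt measurable_const (by fun_prop)
    refine ne_top_of_le_ne_top (ENNReal.add_ne_top.2 ⟨hfC,
      ENNReal.mul_ne_top (ENNReal.ofReal_ne_top (r := C)) (htail δ hδ).ne⟩) ?_
    rw [← lintegral_indicator_const h_tail, excess, excess, ← lintegral_add_left (by fun_prop)]
    refine lintegral_mono fun x => ?_
    by_cases hx : δ < |f x|
    · rw [Set.indicator_of_mem (show x ∈ {x | δ < |f x|} from hx)]
      exact (ENNReal.ofReal_le_ofReal (by linarith)).trans ENNReal.ofReal_add_le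
    · rw [ENNReal.ofReal_of_nonpos (by linarith)]
      exact zero_le
  · calc μ {x | δ < |f x|}
        ≤ μ {x | ENNReal.ofReal (δ / 2) ≤ ENNReal.ofReal (|f x| - δ / 2)} :=
          measure_mono fun x (hx : δ < |f x|) => ENNReal.ofReal_le_ofReal (by linarith)
      _ ≤ excess μ (δ / 2) f / ENNReal.ofReal (δ / 2) :=
          meas_ge_le_lintegral_div (by fun_prop) (by simpa using hδ) ENNReal.ofReal_ne_top
      _ < ∞ := ENNReal.div_lt_top (h _ (half_pos hδ)) (by simpa using hδ)

end Clip

section PositiveOperators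

variable {E : Type*} [AddCommGroup E] [Module ℝ E] [Lattice E] [IsOrderedAddMonoid E]

/-- Linear endomorphisms of a vector lattice are ordered by positivity: `S ≤ T` when `S f ≤ T f` for
every `f ≥ 0`. -/
instance positivityOrder : PartialOrder (Module.End ℝ E) where
  le S T := ∀ f, 0 ≤ f → S f ≤ T f
  le_refl _ _ _ := le_rfl
  le_trans _ _ _ h h' f hf := (h f hf).trans (h' f hf)
  le_antisymm S T h h' := LinearMap.ext fun f => by
    have eq_of_nonneg : ∀ g, 0 ≤ g → S g = T g := fun g hg => (h g hg).antisymm (h' g hg)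
    rw [← posPart_sub_negPart f, map_sub, map_sub, eq_of_nonneg _ (posPart_nonneg f),
      eq_of_nonneg _ (negPart_nonneg f)]

lemma end_nonneg_iff {S : Module.End ℝ E} : 0 ≤ S ↔ ∀ f, 0 ≤ f → 0 ≤ S f := Iff.rfl

lemma monotone_of_end_nonneg {S : Module.End ℝ E} (hS : 0 ≤ S) : Monotone S := fun f g hfg => by
  have := end_nonneg_iff.1 hS (g - f) (sub_nonneg.2 hfg)
  rwa [map_sub, sub_nonneg] at this

lemma abs_apply_le_apply_abs {S : Module.End ℝ E} (hS : 0 ≤ S) (f : E) : |S f| ≤ S |f| :=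
  abs_le'.2 ⟨monotone_of_end_nonneg hS (le_abs_self f), by
    rw [← map_neg]
    exact monotone_of_end_nonneg hS (neg_le_abs f)⟩

instance end_isOrderedRing : IsOrderedRing (Module.End ℝ E) where
  add_le_add_left _ _ h _ f hf := add_le_add_left (h f hf) _
  zero_le_one _ hf := hf
  mul_le_mul_of_nonneg_left _ ha _ _ h f hf := monotone_of_end_nonneg ha (h f hf)
  mul_le_mul_of_nonneg_right _ ha _ _ h f hf := h _ (ha f hf)

instance end_isOrderedModule [IsOrderedModule ℝ E] : IsOrderedModule ℝ (Module.End ℝ E) :=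
  .of_smul_nonneg fun _ hc _ ha f hf => smul_nonneg hc (ha f hf)

end PositiveOperators

section HopfSequence

variable {E : Type*} [AddCommGroup E] [Module ℝ E] [Lattice E]

/-- Hopf's sequence `h₀ = 0`, `hₙ₊₁ = (g + U hₙ)⁺`, a majorant of the partial sums
`∑_{k < n} U ^ k g` of the orbit of `g`. -/
def hopfSeq (U : Module.End ℝ E) (g : E) : ℕ → E
  | 0 => 0
  | n + 1 => (g + U (hopfSeq U g n))⁺

lemma hopfSeq_nonneg (U : Module.End ℝ E) (g : E) : ∀ n, 0 ≤ hopfSeq U g n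
  | 0 => le_rfl
  | _ + 1 => posPart_nonneg _

variable [IsOrderedAddMonoid E] {U : Module.End ℝ E}

lemma hopfSeq_monotone (hU : 0 ≤ U) (g : E) : Monotone (hopfSeq U g) :=
  monotone_nat_of_le_succ fun n => by
    induction n with
    | zero => exact hopfSeq_nonneg U g 1
    | succ n ih => exact posPart_mono (add_le_add_right (monotone_of_end_nonneg hU ih) g)

lemma sum_pow_apply_le_hopfSeq (hU : 0 ≤ U) (g : E) (n : ℕ) :
    (∑ k ∈ Finset.range n, U ^ k) g ≤ hopfSeq U g n := by
  induction n with
  | zero => simp [hopfSeq]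
  | succ n ih =>
    calc (∑ k ∈ Finset.range (n + 1), U ^ k) g = g + U ((∑ k ∈ Finset.range n, U ^ k) g) := by
          rw [geom_sum_succ, add_comm]
          rfl
      _ ≤ g + U (hopfSeq U g n) := add_le_add_right (monotone_of_end_nonneg hU ih) g
      _ ≤ hopfSeq U g (n + 1) := le_posPart _

end HopfSequence

section FunctionSpace

variable {μ : Measure Ω}

instance aeEqFun_isOrderedAddMonoid : IsOrderedAddMonoid (Ω →ₘ[μ] ℝ) where
  add_le_add_left f g h k := by
    rw [← AEEqFun.coeFn_le] at h ⊢
    filter_upwards [h, AEEqFun.coeFn_add f k, AEEqFun.coeFn_add g k] with x hx h_f h_g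
    rw [h_f, h_g]
    exact add_le_add_left hx _

/-- The space `L¹(μ) + L^∞(μ)`. -/
def L1pLinf (μ : Measure Ω) : Submodule ℝ (Ω →ₘ[μ] ℝ) :=
  Lp.LpSubmodule ℝ ℝ 1 μ ⊔ Lp.LpSubmodule ℝ ℝ ∞ μ

lemma mem_L1pLinf {f : Ω →ₘ[μ] ℝ} : f ∈ L1pLinf μ ↔ MemL1pLinf μ f := by
  have mem_iff (p : ℝ≥0∞) (g : Ω →ₘ[μ] ℝ) : g ∈ Lp.LpSubmodule ℝ ℝ p μ ↔ eLpNorm g p μ ≠ ∞ :=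
    Lp.mem_Lp_iff_eLpNorm_lt_top.trans lt_top_iff_ne_top
  simp only [L1pLinf, Submodule.mem_sup, mem_iff, MemL1pLinf]
  grind

namespace L1pLinf

noncomputable instance : AddCommGroup (L1pLinf μ) := Submodule.addCommGroup _

noncomputable instance : CoeFun (L1pLinf μ) fun _ => Ω → ℝ := ⟨fun f => (f : Ω →ₘ[μ] ℝ)⟩

lemma measurable (f : L1pLinf μ) : Measurable f := AEEqFun.measurable _

lemma mem_of_abs_le_add {f : Ω →ₘ[μ] ℝ} (g h : L1pLinf μ) (hf : ∀ᵐ x ∂μ, |f x| ≤ |g x| + |h x|) :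
    f ∈ L1pLinf μ := by
  have mem_abs (g : L1pLinf μ) : |(g : Ω →ₘ[μ] ℝ)| ∈ L1pLinf μ :=
    mem_L1pLinf.2 ((mem_L1pLinf.1 g.2).of_abs_le
      ((AEEqFun.coeFn_abs _).mono fun x hx => (by rw [hx, abs_abs])))
  refine mem_L1pLinf.2 ((mem_L1pLinf.1 (add_mem (mem_abs g) (mem_abs h))).of_abs_le ?_)
  filter_upwards [hf, AEEqFun.coeFn_add |(g : Ω →ₘ[μ] ℝ)| |(h : Ω →ₘ[μ] ℝ)|,
    AEEqFun.coeFn_abs (g : Ω →ₘ[μ] ℝ), AEEqFun.coeFn_abs (h : Ω →ₘ[μ] ℝ)] with x hx h_add h_g h_h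
  rw [h_add, Pi.add_apply, h_g, h_h]
  exact hx.trans (le_abs_self _)

noncomputable instance : Lattice (L1pLinf μ) :=
  Subtype.lattice
    (fun f g hf hg => mem_of_abs_le_add ⟨f, hf⟩ ⟨g, hg⟩ <| by
      filter_upwards [AEEqFun.coeFn_sup f g] with x hx
      rw [hx]
      exact abs_max_le_max_abs_abs.trans (max_le_add_of_nonneg (abs_nonneg _) (abs_nonneg _)))
    (fun f g hf hg => mem_of_abs_le_add ⟨f, hf⟩ ⟨g, hg⟩ <| by
      filter_upwards [AEEqFun.coeFn_inf f g] with x hx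
      rw [hx]
      exact abs_min_le_max_abs_abs.trans (max_le_add_of_nonneg (abs_nonneg _) (abs_nonneg _)))

lemma coeFn_le {f g : L1pLinf μ} : f ≤ g ↔ ∀ᵐ x ∂μ, f x ≤ g x := AEEqFun.coeFn_le.symm

lemma coeFn_add (f g : L1pLinf μ) : ∀ᵐ x ∂μ, (f + g) x = f x + g x := AEEqFun.coeFn_add _ _

lemma coeFn_sub (f g : L1pLinf μ) : ∀ᵐ x ∂μ, (f - g) x = f x - g x := AEEqFun.coeFn_sub _ _

lemma coeFn_smul (c : ℝ) (f : L1pLinf μ) : ∀ᵐ x ∂μ, (c • f) x = c * f x := AEEqFun.coeFn_smul _ _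

lemma coeFn_zero : ∀ᵐ x ∂μ, (0 : L1pLinf μ) x = 0 := AEEqFun.coeFn_zero

lemma coeFn_abs (f : L1pLinf μ) : ∀ᵐ x ∂μ, |f| x = |f x| := AEEqFun.coeFn_abs _

lemma coeFn_posPart (f : L1pLinf μ) : ∀ᵐ x ∂μ, f⁺ x = max (f x) 0 := by
  filter_upwards [AEEqFun.coeFn_sup (f : Ω →ₘ[μ] ℝ) 0, coeFn_zero (μ := μ)] with x h_sup h_zero
  exact h_sup.trans (congrArg _ h_zero)

lemma coeFn_nonneg {f : L1pLinf μ} : 0 ≤ f ↔ ∀ᵐ x ∂μ, 0 ≤ f x :=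
  coeFn_le.trans (eventually_congr (coeFn_zero.mono fun x hx => by rw [hx]))

instance : IsOrderedModule ℝ (L1pLinf μ) :=
  .of_smul_nonneg fun c hc f hf => coeFn_nonneg.2 <| by
    filter_upwards [coeFn_nonneg.1 hf, coeFn_smul c f] with x hx h_smul
    rw [h_smul]
    exact mul_nonneg hc hx

lemma mem_of_bounded {f : Ω →ₘ[μ] ℝ} {C : ℝ} (hC : 0 ≤ C) (h : ∀ᵐ x ∂μ, |f x| ≤ C) :
    f ∈ L1pLinf μ :=
  mem_L1pLinf.2 (memL1pLinf_iff_excess_ne_top.2 ⟨C, hC, (excess_eq_zero h).trans_ne zero_ne_top⟩)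

noncomputable instance : One (L1pLinf μ) :=
  ⟨1, mem_of_bounded zero_le_one (AEEqFun.coeFn_one.mono fun x hx => by rw [hx]; simp)⟩

lemma coeFn_one : ∀ᵐ x ∂μ, (1 : L1pLinf μ) x = 1 := AEEqFun.coeFn_one

lemma eLpNorm_add_le (f g : L1pLinf μ) :
    eLpNorm (f + g : L1pLinf μ) 1 μ ≤ eLpNorm f 1 μ + eLpNorm g 1 μ :=
  (eLpNorm_congr_ae (coeFn_add f g)).trans_le
    (MeasureTheory.eLpNorm_add_le (measurable f).aestronglyMeasurable
      (measurable g).aestronglyMeasurable le_rfl)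

lemma eLpNorm_sub_le (f g : L1pLinf μ) :
    eLpNorm (f - g : L1pLinf μ) 1 μ ≤ eLpNorm f 1 μ + eLpNorm g 1 μ :=
  (eLpNorm_congr_ae (coeFn_sub f g)).trans_le
    (MeasureTheory.eLpNorm_sub_le (measurable f).aestronglyMeasurable
      (measurable g).aestronglyMeasurable le_rfl)

lemma eLpNorm_zero : eLpNorm (0 : L1pLinf μ) 1 μ = 0 :=
  (eLpNorm_congr_ae coeFn_zero).trans MeasureTheory.eLpNorm_zero

lemma eLpNorm_sum_le {ι : Type*} (s : Finset ι) (f : ι → L1pLinf μ) :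
    eLpNorm (∑ i ∈ s, f i : L1pLinf μ) 1 μ ≤ ∑ i ∈ s, eLpNorm (f i) 1 μ :=
  Finset.le_sum_of_subadditive (fun f : L1pLinf μ => eLpNorm f 1 μ)
    eLpNorm_zero.le eLpNorm_add_le s f

lemma eLpNorm_smul {c : ℝ} (hc : 0 ≤ c) (f : L1pLinf μ) :
    eLpNorm (c • f) 1 μ = ENNReal.ofReal c * eLpNorm f 1 μ := by
  rw [eLpNorm_congr_ae (coeFn_smul c f), ← Real.enorm_of_nonneg hc]
  exact eLpNorm_const_smul c f 1 μ

lemma one_nonneg : (0 : L1pLinf μ) ≤ 1 :=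
  coeFn_nonneg.2 (coeFn_one.mono fun x hx => by rw [hx]; exact zero_le_one)

lemma coeFn_posPart_abs_sub (δ : ℝ) (f : L1pLinf μ) :
    ∀ᵐ x ∂μ, ((|f| - δ • 1)⁺ : L1pLinf μ) x = max (|f x| - δ) 0 := by
  filter_upwards [coeFn_posPart (|f| - δ • 1), coeFn_sub |f| (δ • 1),
    coeFn_abs f, coeFn_smul δ 1, coeFn_one (μ := μ)]
    with x h_pos h_sub h_abs h_smul h_one
  rw [h_pos, h_sub, h_abs, h_smul, h_one, mul_one]

lemma eLpNorm_posPart_abs_sub (δ : ℝ) (f : L1pLinf μ) :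
    eLpNorm ((|f| - δ • 1)⁺ : L1pLinf μ) 1 μ = excess μ δ f := by
  rw [← excess_zero]
  refine lintegral_congr_ae ((coeFn_posPart_abs_sub δ f).mono fun x hx => ?_)
  dsimp only
  rw [hx, abs_of_nonneg (le_max_right _ _), sub_zero, ENNReal.ofReal_max, ENNReal.ofReal_zero,
    max_zero]

end L1pLinf

end FunctionSpace

section PosContraction

variable {μ : Measure Ω}

/-- A positive operator on `L¹(μ) + L^∞(μ)` that contracts the `L¹`-norm and the `L^∞`-norm; by
positivity, the latter only has to be tested on the constant function `1`. -/
structure IsPosContraction (S : Module.End ℝ (L1pLinf μ)) : Prop where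
  nonneg : 0 ≤ S
  eLpNorm_one_le : ∀ f, eLpNorm (S f) 1 μ ≤ eLpNorm f 1 μ
  apply_one_le : S 1 ≤ 1

/-- The monoid of positive contractions of `L¹(μ) + L^∞(μ)`. -/
def posContractions (μ : Measure Ω) : Submonoid (Module.End ℝ (L1pLinf μ)) where
  carrier := {S | IsPosContraction S}
  one_mem' := ⟨zero_le_one, fun _ => le_rfl, le_rfl⟩
  mul_mem' hS hT := ⟨mul_nonneg hS.nonneg hT.nonneg,
    fun f => (hS.eLpNorm_one_le _).trans (hT.eLpNorm_one_le f),
    (monotone_of_end_nonneg hS.nonneg hT.apply_one_le).trans hS.apply_one_le⟩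

namespace IsPosContraction

variable {S : Module.End ℝ (L1pLinf μ)}

lemma pow (hS : IsPosContraction S) (k : ℕ) : IsPosContraction (S ^ k) :=
  (posContractions μ).pow_mem hS k

lemma sum_smul_pow (hS : IsPosContraction S) {c : ℕ → ℝ} (hc : ∀ k, 0 ≤ c k) {n : ℕ}
    (hc_sum : ∑ k ∈ Finset.range n, c k ≤ 1) :
    IsPosContraction (∑ k ∈ Finset.range n, c k • S ^ k) where
  nonneg := Finset.sum_nonneg fun k _ => smul_nonneg (hc k) (hS.pow k).nonneg
  eLpNorm_one_le f := by
    rw [LinearMap.sum_apply]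
    calc eLpNorm (∑ k ∈ Finset.range n, (c k • S ^ k) f : L1pLinf μ) 1 μ
        ≤ ∑ k ∈ Finset.range n, eLpNorm (c k • (S ^ k) f) 1 μ := L1pLinf.eLpNorm_sum_le _ _
      _ ≤ ∑ k ∈ Finset.range n, ENNReal.ofReal (c k) * eLpNorm f 1 μ := by
          refine Finset.sum_le_sum fun k _ => ?_
          rw [L1pLinf.eLpNorm_smul (hc k)]
          gcongr
          exact (hS.pow k).eLpNorm_one_le f
      _ = ENNReal.ofReal (∑ k ∈ Finset.range n, c k) * eLpNorm f 1 μ := by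
          rw [← Finset.sum_mul, ENNReal.ofReal_sum_of_nonneg fun k _ => hc k]
      _ ≤ eLpNorm f 1 μ := mul_le_of_le_one_left' (ENNReal.ofReal_le_one.2 hc_sum)
  apply_one_le := by
    rw [LinearMap.sum_apply]
    calc ∑ k ∈ Finset.range n, (c k • S ^ k) 1
        ≤ ∑ k ∈ Finset.range n, c k • (1 : L1pLinf μ) :=
          Finset.sum_le_sum fun k _ => smul_le_smul_of_nonneg_left (hS.pow k).apply_one_le (hc k)
      _ = (∑ k ∈ Finset.range n, c k) • (1 : L1pLinf μ) := (Finset.sum_smul ..).symm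
      _ ≤ (1 : ℝ) • 1 := smul_le_smul_of_nonneg_right hc_sum L1pLinf.one_nonneg
      _ = 1 := one_smul ..

lemma powAvg (hS : IsPosContraction S) (n : ℕ) : IsPosContraction (powAvg n S) := by
  rw [_root_.powAvg, Finset.smul_sum]
  exact hS.sum_smul_pow (fun _ => by positivity) (by simpa using mul_inv_le_one)

lemma abs_apply_le (hS : IsPosContraction S) {δ : ℝ} (hδ : 0 ≤ δ) (f : L1pLinf μ) :
    ∀ᵐ x ∂μ, |S f x| ≤ S (|f| - δ • 1)⁺ x + δ := by
  have h_abs : |S f| ≤ S (|f| - δ • 1)⁺ + δ • 1 :=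
    calc |S f| ≤ S |f| := abs_apply_le_apply_abs hS.nonneg f
      _ ≤ S ((|f| - δ • 1)⁺ + δ • 1) :=
        monotone_of_end_nonneg hS.nonneg (sub_le_iff_le_add.1 (le_posPart _))
      _ = S (|f| - δ • 1)⁺ + δ • S 1 := by rw [map_add, map_smul]
      _ ≤ S (|f| - δ • 1)⁺ + δ • 1 :=
        add_le_add_right (smul_le_smul_of_nonneg_left hS.apply_one_le hδ) _
  filter_upwards [L1pLinf.coeFn_le.1 h_abs, L1pLinf.coeFn_abs (S f), L1pLinf.coeFn_smul δ 1,
    L1pLinf.coeFn_add (S (|f| - δ • 1)⁺) (δ • 1), L1pLinf.coeFn_one (μ := μ)]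
    with x hx h_abs h_smul h_add h_one
  rwa [h_abs, h_add, h_smul, h_one, mul_one] at hx

lemma excess_apply_le (hS : IsPosContraction S) {δ : ℝ} (hδ : 0 ≤ δ) (f : L1pLinf μ) :
    excess μ δ (S f) ≤ excess μ δ f := by
  rw [← L1pLinf.eLpNorm_posPart_abs_sub δ f]
  refine le_trans ?_ (hS.eLpNorm_one_le _)
  rw [← excess_zero]
  refine excess_le_of_ae ((hS.abs_apply_le hδ f).mono fun x hx => le_max_of_le_left ?_)
  linarith [le_abs_self (S (|f| - δ • 1)⁺ x)]

lemma abs_apply_le_of_abs_le (hS : IsPosContraction S) {C : ℝ} (hC : 0 ≤ C) {f : L1pLinf μ}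
    (h : ∀ᵐ x ∂μ, |f x| ≤ C) : ∀ᵐ x ∂μ, |S f x| ≤ C := by
  have h_zero : (|f| - C • 1)⁺ = 0 := Subtype.ext <| AEEqFun.ext <| by
    filter_upwards [L1pLinf.coeFn_posPart_abs_sub C f, h, L1pLinf.coeFn_zero (μ := μ)]
      with x h_pos hx h_zero
    exact h_pos.trans ((max_eq_right (sub_nonpos.2 hx)).trans h_zero.symm)
  filter_upwards [hS.abs_apply_le hC f, L1pLinf.coeFn_zero (μ := μ)] with x hx h0
  rwa [h_zero, map_zero, h0, zero_add] at hx

end IsPosContraction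

namespace IsPosDS

variable {T : (Ω →ₘ[μ] ℝ) → Ω →ₘ[μ] ℝ}

lemma memL1pLinf_apply (hT : IsPosDS μ T) {f : Ω →ₘ[μ] ℝ} (hf : MemL1pLinf μ f) :
    MemL1pLinf μ (T f) := by
  obtain ⟨g, h, hg, hh, rfl⟩ := hf
  have hg' : MemL1pLinf μ g :=
    ⟨g, 0, hg, by simp [eLpNorm_congr_ae AEEqFun.coeFn_zero], (add_zero g).symm⟩
  have hh' : MemL1pLinf μ h :=
    ⟨0, h, by simp [eLpNorm_congr_ae AEEqFun.coeFn_zero], hh, (zero_add h).symm⟩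
  exact ⟨T g, T h, ne_top_of_le_ne_top hg (hT.norm_one g hg'),
    ne_top_of_le_ne_top hh (hT.norm_top h hh'), hT.map_add g h hg' hh'⟩

/-- A positive Dunford–Schwartz operator as a linear endomorphism of `L¹(μ) + L^∞(μ)`. -/
noncomputable def toEnd (hT : IsPosDS μ T) : Module.End ℝ (L1pLinf μ) where
  toFun f := ⟨T f, mem_L1pLinf.2 (hT.memL1pLinf_apply (mem_L1pLinf.1 f.2))⟩
  map_add' f g := Subtype.ext (hT.map_add f g (mem_L1pLinf.1 f.2) (mem_L1pLinf.1 g.2))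
  map_smul' c f := Subtype.ext (hT.map_smul c f (mem_L1pLinf.1 f.2))

lemma isPosContraction_toEnd (hT : IsPosDS μ T) : IsPosContraction hT.toEnd where
  nonneg f hf := hT.map_pos f (mem_L1pLinf.1 f.2) hf
  eLpNorm_one_le f := hT.norm_one f (mem_L1pLinf.1 f.2)
  apply_one_le := by
    have h_one : eLpNorm (1 : L1pLinf μ) ∞ μ ≤ ENNReal.ofReal 1 :=
      eLpNorm_top_le_ofReal (L1pLinf.coeFn_one.mono fun x hx => by rw [hx, abs_one])
    have h_le := (hT.norm_top 1 (mem_L1pLinf.1 (1 : L1pLinf μ).2)).trans h_one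
    refine L1pLinf.coeFn_le.2 ?_
    filter_upwards [ae_abs_le_toReal_eLpNorm_top (ne_top_of_le_ne_top ENNReal.ofReal_ne_top h_le),
      L1pLinf.coeFn_one (μ := μ)] with x hx h1
    rw [h1]
    exact (le_abs_self _).trans (hx.trans (ENNReal.toReal_le_of_le_ofReal zero_le_one h_le))

lemma coe_toEnd_pow_apply (hT : IsPosDS μ T) (k : ℕ) (f : L1pLinf μ) :
    ((hT.toEnd ^ k) f : Ω →ₘ[μ] ℝ) = T^[k] f := by
  induction k with
  | zero => rfl
  | succ k ih =>
    rw [pow_succ', Module.End.mul_apply, Function.iterate_succ_apply', ← ih]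
    rfl

end IsPosDS

end PosContraction

section MaximalInequality

variable {μ : Measure Ω} {U : Module.End ℝ (L1pLinf μ)}

lemma mul_measure_exists_le {P : ℕ → Ω → Prop} {a b : ℝ≥0∞}
    (h : ∀ N, a * μ {x | ∃ n < N, P n x} ≤ b) : a * μ {x | ∃ n, P n x} ≤ b := by
  have h_union : {x | ∃ n, P n x} = ⋃ N, {x | ∃ n < N, P n x} := by
    ext x
    simp only [mem_ofPred_eq, mem_iUnion]
    exact ⟨fun ⟨n, hn⟩ => ⟨n + 1, n, n.lt_succ_self, hn⟩, fun ⟨_, n, _, hn⟩ => ⟨n, hn⟩⟩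
  have h_mono : Monotone fun N => {x | ∃ n < N, P n x} :=
    fun _ _ hMN _ ⟨n, hn, hx⟩ => ⟨n, hn.trans_le hMN, hx⟩
  rw [h_union, h_mono.measure_iUnion, ENNReal.mul_iSup]
  exact iSup_le h

lemma eLpNorm_hopfSeq_succ_add_le (u : L1pLinf μ) {lam : ℝ} (hlam : 0 < lam) (n : ℕ) :
    eLpNorm (hopfSeq U (u - lam • 1) (n + 1) : L1pLinf μ) 1 μ +
        ENNReal.ofReal lam * μ {x | 0 < hopfSeq U (u - lam • 1) (n + 1) x} ≤
      eLpNorm u 1 μ + eLpNorm (U (hopfSeq U (u - lam • 1) n)) 1 μ := by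
  set h := hopfSeq U (u - lam • 1)
  have h_meas : MeasurableSet {x | 0 < h (n + 1) x} :=
    measurableSet_lt measurable_const (L1pLinf.measurable _)
  have hm := L1pLinf.measurable (h (n + 1))
  have hu := L1pLinf.measurable u
  simp_rw [← excess_zero, excess, sub_zero]
  rw [← lintegral_indicator_const h_meas, ← lintegral_add_left (by fun_prop),
    ← lintegral_add_left (by fun_prop)]
  refine lintegral_mono_ae ?_
  filter_upwards [L1pLinf.coeFn_posPart (u - lam • 1 + U (h n)),
    L1pLinf.coeFn_add (u - lam • 1) (U (h n)), L1pLinf.coeFn_sub u (lam • 1),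
    L1pLinf.coeFn_smul lam 1, L1pLinf.coeFn_one (μ := μ)] with x h_pos h_add h_sub h_smul h_one
  have h_succ : h (n + 1) x = max (u x - lam + U (h n) x) 0 := by
    rw [← mul_one lam, ← h_one, ← h_smul, ← h_sub, ← h_add]
    exact h_pos
  rw [← ENNReal.ofReal_add (abs_nonneg _) (abs_nonneg _)]
  by_cases hx : 0 < h (n + 1) x
  · rw [indicator_of_mem (by exact hx), ← ENNReal.ofReal_add (abs_nonneg _) hlam.le]
    refine ENNReal.ofReal_le_ofReal ?_
    rw [abs_of_pos hx]
    grind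
  · rw [indicator_of_notMem (by exact hx), add_zero]
    refine ENNReal.ofReal_le_ofReal ?_
    rw [(not_lt.1 hx).antisymm (h_succ ▸ le_max_right _ _), abs_zero]
    positivity

namespace IsPosContraction

lemma eLpNorm_hopfSeq_ne_top (hU : IsPosContraction U) {u : L1pLinf μ} (hu : eLpNorm u 1 μ ≠ ∞)
    {lam : ℝ} (hlam : 0 < lam) (n : ℕ) :
    eLpNorm (hopfSeq U (u - lam • 1) n : L1pLinf μ) 1 μ ≠ ∞ := by
  induction n with
  | zero => exact L1pLinf.eLpNorm_zero.trans_ne zero_ne_top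
  | succ n ih =>
    refine ne_top_of_le_ne_top ?_ (le_self_add.trans (eLpNorm_hopfSeq_succ_add_le u hlam n))
    exact ENNReal.add_ne_top.2 ⟨hu, ne_top_of_le_ne_top ih (hU.eLpNorm_one_le _)⟩

lemma mul_measure_hopfSeq_pos_le (hU : IsPosContraction U) {u : L1pLinf μ}
    (hu : eLpNorm u 1 μ ≠ ∞) {lam : ℝ} (hlam : 0 < lam) (n : ℕ) :
    ENNReal.ofReal lam * μ {x | 0 < hopfSeq U (u - lam • 1) (n + 1) x} ≤ eLpNorm u 1 μ := by
  set h := hopfSeq U (u - lam • 1)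
  have h_mono : eLpNorm (h n) 1 μ ≤ eLpNorm (h (n + 1)) 1 μ := by
    refine eLpNorm_mono_ae ?_
    filter_upwards [L1pLinf.coeFn_le.1 (hopfSeq_monotone hU.nonneg (u - lam • 1) n.le_succ),
      L1pLinf.coeFn_nonneg.1 (hopfSeq_nonneg U (u - lam • 1) n)] with x h_le h_nonneg
    exact abs_le_abs_of_nonneg h_nonneg h_le
  refine (ENNReal.add_le_add_iff_left (hU.eLpNorm_hopfSeq_ne_top hu hlam (n + 1))).1 ?_
  calc eLpNorm (h (n + 1)) 1 μ + ENNReal.ofReal lam * μ {x | 0 < h (n + 1) x}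
      ≤ eLpNorm u 1 μ + eLpNorm (U (h n)) 1 μ := eLpNorm_hopfSeq_succ_add_le u hlam n
    _ ≤ eLpNorm u 1 μ + eLpNorm (h (n + 1)) 1 μ := by
        gcongr
        exact (hU.eLpNorm_one_le _).trans h_mono
    _ = eLpNorm (h (n + 1)) 1 μ + eLpNorm u 1 μ := add_comm _ _

lemma powAvg_apply_le (hU : IsPosContraction U) (u : L1pLinf μ) {lam : ℝ} (hlam : 0 ≤ lam) (n : ℕ) :
    _root_.powAvg n U u ≤ (n : ℝ)⁻¹ • hopfSeq U (u - lam • 1) n + lam • 1 :=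
  calc _root_.powAvg n U u
      = _root_.powAvg n U (u - lam • 1) + lam • _root_.powAvg n U 1 := by
        rw [map_sub, map_smul, sub_add_cancel]
    _ ≤ (n : ℝ)⁻¹ • hopfSeq U (u - lam • 1) n + lam • 1 :=
        add_le_add (smul_le_smul_of_nonneg_left
          (sum_pow_apply_le_hopfSeq hU.nonneg (u - lam • 1) n) (by positivity))
          (smul_le_smul_of_nonneg_left (hU.powAvg n).apply_one_le hlam)

/-- Hopf's maximal ergodic inequality. -/
lemma mul_measure_exists_powAvg_gt_le (hU : IsPosContraction U) (u : L1pLinf μ) {lam : ℝ}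
    (hlam : 0 < lam) :
    ENNReal.ofReal lam * μ {x | ∃ n, lam < _root_.powAvg n U u x} ≤ eLpNorm u 1 μ := by
  by_cases hu : eLpNorm u 1 μ = ∞
  · simp [hu]
  refine mul_measure_exists_le fun N => le_trans ?_ (hU.mul_measure_hopfSeq_pos_le hu hlam N)
  refine mul_le_mul_right (measure_mono_ae ?_) _
  set h := hopfSeq U (u - lam • 1)
  have h_le : ∀ n, ∀ᵐ x ∂μ, _root_.powAvg n U u x ≤ (n : ℝ)⁻¹ * h n x + lam := fun n => by
    filter_upwards [L1pLinf.coeFn_le.1 (hU.powAvg_apply_le u hlam.le n),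
      L1pLinf.coeFn_add ((n : ℝ)⁻¹ • h n) (lam • 1), L1pLinf.coeFn_smul (n : ℝ)⁻¹ (h n),
      L1pLinf.coeFn_smul lam 1, L1pLinf.coeFn_one (μ := μ)] with x hx h_add h_n h_lam h_one
    rwa [h_add, h_n, h_lam, h_one, mul_one] at hx
  have h_mono : ∀ n, ∀ᵐ x ∂μ, n < N → h n x ≤ h (N + 1) x := fun n =>
    eventually_imp_distrib_left.2 fun hn => L1pLinf.coeFn_le.1
      (hopfSeq_monotone hU.nonneg (u - lam • 1) (by lia))
  filter_upwards [ae_all_iff.2 h_le, ae_all_iff.2 h_mono] with x hx hx_mono ⟨n, hn, hxn⟩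
  have : 0 < (n : ℝ)⁻¹ * h n x := by linarith [hx n]
  exact (pos_of_mul_pos_right this (by positivity)).trans_le (hx_mono n hn)

end IsPosContraction

/-- The weak type `(1, 1)` inequality for the maximal function `sup_k |F k u|`, uniformly in the
level `δ` at which the bounded part of `u` is split off. -/
def HasMaximalInequality (F : ℕ → Module.End ℝ (L1pLinf μ)) : Prop :=
  ∃ C : ℝ, ∀ (u : L1pLinf μ) (δ lam : ℝ), 0 ≤ δ → 0 < lam →
    ENNReal.ofReal lam * μ {x | ∃ k, δ + lam < |F k u x|} ≤ ENNReal.ofReal C * excess μ δ u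

lemma hasMaximalInequality_of_le_powAvg {F : ℕ → Module.End ℝ (L1pLinf μ)}
    (hF : ∀ k, IsPosContraction (F k)) {C : ℝ} (hC : 0 < C)
    (h : ∀ K, ∃ U, IsPosContraction U ∧ ∀ k < K, ∃ n, F k ≤ C • powAvg n U) :
    HasMaximalInequality F := by
  refine ⟨C, fun u δ lam hδ hlam => mul_measure_exists_le fun K => ?_⟩
  obtain ⟨U, hU, hFU⟩ := h K
  set v : L1pLinf μ := (|u| - δ • 1)⁺
  have h_le : ∀ k, ∀ᵐ x ∂μ, k < K → ∃ n, |F k u x| ≤ C * powAvg n U v x + δ := fun k =>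
    eventually_imp_distrib_left.2 fun hk => by
      obtain ⟨n, hn⟩ := hFU k hk
      filter_upwards [(hF k).abs_apply_le hδ u, L1pLinf.coeFn_le.1 (hn v (posPart_nonneg _)),
        L1pLinf.coeFn_smul C (powAvg n U v)] with x h_abs h_dom h_smul
      refine ⟨n, h_abs.trans (add_le_add_left (h_dom.trans_eq ?_) δ)⟩
      rw [← h_smul]
      rfl
  calc ENNReal.ofReal lam * μ {x | ∃ k < K, δ + lam < |F k u x|}
      ≤ ENNReal.ofReal lam * μ {x | ∃ n, lam / C < powAvg n U v x} := by
        refine mul_le_mul_right (measure_mono_ae ?_) _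
        filter_upwards [ae_all_iff.2 h_le] with x hx ⟨k, hk, hxk⟩
        obtain ⟨n, hn⟩ := hx k hk
        exact ⟨n, (div_lt_iff₀' hC).2 (by linarith)⟩
    _ = ENNReal.ofReal C * (ENNReal.ofReal (lam / C) * μ {x | ∃ n, lam / C < powAvg n U v x}) := by
        rw [← mul_assoc, ← ENNReal.ofReal_mul hC.le, mul_div_cancel₀ _ hC.ne']
    _ ≤ ENNReal.ofReal C * eLpNorm v 1 μ :=
        mul_le_mul_right (hU.mul_measure_exists_powAvg_gt_le v (div_pos hlam hC)) _
    _ = ENNReal.ofReal C * excess μ δ u := by rw [L1pLinf.eLpNorm_posPart_abs_sub]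

end MaximalInequality

section AlmostUniformCauchy

variable {μ : Measure Ω}

/-- Almost uniformly Cauchy sequences, expressed through the oscillation of the tails: it tends to
`0` in measure. -/
def AuCauchy (μ : Measure Ω) (F : ℕ → Ω → ℝ) : Prop :=
  ∀ δ : ℝ, 0 < δ →
    Tendsto (fun K => μ {x | ∃ k ≥ K, ∃ l ≥ K, δ < |F k x - F l x|}) atTop (𝓝 0)

namespace AuCauchy

variable {F G : ℕ → Ω → ℝ}

lemma const (f : Ω → ℝ) : AuCauchy μ fun _ => f := fun δ hδ => by
  simp [hδ.not_gt]

lemma of_abs_sub_le (hF : AuCauchy μ F) (hG : AuCauchy μ G) {H : ℕ → Ω → ℝ} {c : ℝ} (hc : 0 < c)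
    (h : ∀ᵐ x ∂μ, ∀ k l, |H k x - H l x| ≤ c * (|F k x - F l x| + |G k x - G l x|)) :
    AuCauchy μ H := fun δ hδ => by
  have hδ' : 0 < δ / (2 * c) := by positivity
  have h_lim := (hF _ hδ').add (hG _ hδ')
  rw [add_zero] at h_lim
  refine tendsto_of_tendsto_of_tendsto_of_le_of_le tendsto_const_nhds h_lim (fun _ => zero_le)
    fun K => (measure_mono_ae ?_).trans (measure_union_le _ _)
  filter_upwards [h] with x hx ⟨k, hk, l, hl, hkl⟩
  change (∃ k ≥ K, ∃ l ≥ K, _) ∨ (∃ k ≥ K, ∃ l ≥ K, _)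
  by_contra! h_not
  have hF_le := (le_div_iff₀ (by positivity)).1 (h_not.1 k hk l hl)
  have hG_le := (le_div_iff₀ (by positivity)).1 (h_not.2 k hk l hl)
  linarith [hx k l]

lemma of_tendsto_bound {c : ℕ → ℝ} (hc : Tendsto c atTop (𝓝 0))
    (h : ∀ k, ∀ᵐ x ∂μ, |F k x| ≤ c k) : AuCauchy μ F := fun δ hδ => by
  obtain ⟨K₀, hK₀⟩ := eventually_atTop.1 (hc.eventually_lt_const (half_pos hδ))
  refine tendsto_atTop_of_eventually_const (i₀ := K₀) fun K hK =>
    measure_mono_null_ae ?_ measure_empty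
  filter_upwards [ae_all_iff.2 h] with x hx ⟨k, hk, l, hl, hkl⟩
  linarith [abs_sub (F k x) (F l x), hx k, hx l, hK₀ k (hK.trans hk), hK₀ l (hK.trans hl)]

lemma exists_uniform_off (hF : AuCauchy μ F) {ε : ℝ≥0∞} (hε : ε ≠ 0) :
    ∃ B, μ B ≤ ε ∧ ∀ δ : ℝ, 0 < δ → ∃ K, ∀ x ∉ B, ∀ k ≥ K, ∀ l ≥ K, |F k x - F l x| ≤ δ := by
  obtain ⟨ε', hε'_pos, hε'_sum⟩ := ENNReal.exists_pos_sum_of_countable hε ℕ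
  have h_level : ∀ j : ℕ, ∃ K,
      μ {x | ∃ k ≥ K, ∃ l ≥ K, 1 / ((j : ℝ) + 1) < |F k x - F l x|} ≤ ε' j :=
    fun j => (ENNReal.tendsto_nhds_zero.1 (hF _ (by positivity)) _
      (ENNReal.coe_pos.2 (hε'_pos j))).exists
  choose K hK using h_level
  refine ⟨_, (measure_iUnion_le _).trans ((ENNReal.tsum_le_tsum hK).trans hε'_sum.le),
    fun δ hδ => ?_⟩
  obtain ⟨j, hj⟩ := exists_nat_one_div_lt hδ
  refine ⟨K j, fun x hx k hk l hl => ?_⟩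
  by_contra! h_gt
  exact hx (mem_iUnion.2 ⟨j, k, hk, l, hl, hj.trans h_gt⟩)

lemma ae_exists_tendsto (hF : AuCauchy μ F) : ∀ᵐ x ∂μ, ∃ y, Tendsto (F · x) atTop (𝓝 y) := by
  refine le_antisymm (le_of_forall_gt fun ε hε => ?_) zero_le
  obtain ⟨ε', hε', hε'_lt⟩ := exists_between hε
  obtain ⟨B, hB, h_cauchy⟩ := hF.exists_uniform_off hε'.ne'
  refine (measure_mono fun x hx => ?_).trans_lt (hB.trans_lt hε'_lt)
  by_contra hxB
  refine hx (cauchySeq_tendsto_of_complete (Metric.cauchySeq_iff.2 fun δ hδ => ?_))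
  obtain ⟨K, hK⟩ := h_cauchy (δ / 2) (half_pos hδ)
  exact ⟨K, fun k hk l hl => (hK x hxB k hk l hl).trans_lt (half_lt_self hδ)⟩

lemma exists_auTendsto {F : ℕ → Ω →ₘ[μ] ℝ} (hF : AuCauchy μ fun k => F k) :
    ∃ f : Ω →ₘ[μ] ℝ, AuTendsto μ atTop F f ∧ ∀ᵐ x ∂μ, Tendsto (F · x) atTop (𝓝 (f x)) := by
  obtain ⟨φ, hφ, h_lim⟩ := measurable_limit_of_tendsto_metrizable_ae
    (fun k => (AEEqFun.measurable (F k)).aemeasurable) hF.ae_exists_tendsto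
  set f : Ω →ₘ[μ] ℝ := AEEqFun.mk φ hφ.aestronglyMeasurable
  have h_tendsto : ∀ᵐ x ∂μ, Tendsto (F · x) atTop (𝓝 (f x)) := by
    filter_upwards [h_lim, AEEqFun.coeFn_mk φ hφ.aestronglyMeasurable] with x hx h_mk
    rwa [h_mk]
  refine ⟨f, fun ε hε => ?_, h_tendsto⟩
  obtain ⟨B, hB, h_cauchy⟩ := hF.exists_uniform_off (ENNReal.ofReal_pos.2 hε).ne'
  refine ⟨(toMeasurable μ B)ᶜ, (measurableSet_toMeasurable μ B).compl,
    by rwa [compl_compl, measure_toMeasurable], ENNReal.tendsto_nhds_zero.2 fun η hη => ?_⟩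
  obtain ⟨δ, hδ, hδη⟩ := ENNReal.lt_iff_exists_nnreal_btwn.1 hη
  obtain ⟨K, hK⟩ := h_cauchy δ (ENNReal.coe_pos.1 hδ)
  filter_upwards [eventually_ge_atTop K] with k hk
  refine (eLpNorm_top_le_ofReal ?_).trans (ENNReal.ofReal_coe_nnreal.trans_le hδη.le)
  filter_upwards [h_tendsto, AEEqFun.coeFn_sub (F k) f] with x hx h_sub
  by_cases hxB : x ∈ (toMeasurable μ B)ᶜ
  · rw [indicator_of_mem hxB, h_sub]
    refine le_of_tendsto (hx.const_sub (F k x)).abs ?_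
    filter_upwards [eventually_ge_atTop K] with l hl
    exact hK x (fun h => hxB (subset_toMeasurable μ B h)) k hk l hl
  · rw [indicator_of_notMem hxB, abs_zero]
    exact δ.2

end AuCauchy

end AlmostUniformCauchy

section BanachPrinciple

variable {μ : Measure Ω} {F : ℕ → Module.End ℝ (L1pLinf μ)}

/-- The subspace of those `f` for which the sequence `F k f` is almost uniformly Cauchy. -/
def auCauchySubmodule (F : ℕ → Module.End ℝ (L1pLinf μ)) : Submodule ℝ (L1pLinf μ) where
  carrier := {f | AuCauchy μ fun k => F k f}
  zero_mem' := .of_tendsto_bound tendsto_const_nhds fun k => by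
    filter_upwards [L1pLinf.coeFn_zero (μ := μ)] with x hx
    rw [map_zero, hx, abs_zero]
  add_mem' {f g} hf hg := hf.of_abs_sub_le hg one_pos <| by
    filter_upwards [ae_all_iff.2 fun k => L1pLinf.coeFn_add (F k f) (F k g)] with x hx k l
    rw [map_add, map_add, hx, hx, add_sub_add_comm, one_mul]
    exact abs_add_le _ _
  smul_mem' c f hf := hf.of_abs_sub_le hf (c := |c| + 1) (by positivity) <| by
    filter_upwards [ae_all_iff.2 fun k => L1pLinf.coeFn_smul c (F k f)] with x hx k l
    rw [map_smul, map_smul, hx, hx, ← mul_sub, abs_mul]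
    nlinarith [abs_nonneg c, abs_nonneg (F k f x - F l f x)]

lemma HasMaximalInequality.exists_measure_le (hF : HasMaximalInequality F) {δ : ℝ} (hδ : 0 < δ)
    {η : ℝ≥0∞} (hη : 0 < η) :
    ∃ ε : ℝ, 0 < ε ∧ ∀ u : L1pLinf μ, excess μ ε u ≤ ENNReal.ofReal ε →
      μ {x | ∃ k, δ < |F k u x|} ≤ η := by
  obtain ⟨C, hC⟩ := hF
  have h_zero : Tendsto (fun ε : ℝ => ENNReal.ofReal C * ENNReal.ofReal ε) (𝓝[>] 0) (𝓝 0) := by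
    have := ENNReal.Tendsto.const_mul (ENNReal.tendsto_ofReal (tendsto_id (α := ℝ) (x := 𝓝 0)))
      (.inr (ENNReal.ofReal_ne_top (r := C)))
    rw [ENNReal.ofReal_zero, mul_zero] at this
    exact this.mono_left nhdsWithin_le_nhds
  have hδ' : ENNReal.ofReal (δ / 2) ≠ 0 := (ENNReal.ofReal_pos.2 (half_pos hδ)).ne'
  obtain ⟨ε, hε_lt, hε, hε_le⟩ := ((h_zero.eventually_lt_const
    (ENNReal.mul_pos hδ' hη.ne')).and (Ioc_mem_nhdsGT (half_pos hδ))).exists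
  refine ⟨ε, hε, fun u hu => ?_⟩
  refine (ENNReal.mul_le_mul_iff_right hδ' ENNReal.ofReal_ne_top).1 ?_
  calc ENNReal.ofReal (δ / 2) * μ {x | ∃ k, δ < |F k u x|}
      ≤ ENNReal.ofReal (δ / 2) * μ {x | ∃ k, ε + δ / 2 < |F k u x|} := by
        gcongr
        linarith
    _ ≤ ENNReal.ofReal C * excess μ ε u := hC u ε (δ / 2) hε.le (half_pos hδ)
    _ ≤ ENNReal.ofReal C * ENNReal.ofReal ε := by gcongr
    _ ≤ ENNReal.ofReal (δ / 2) * η := hε_lt.le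

/-- Banach's principle. -/
lemma HasMaximalInequality.mem_auCauchySubmodule (hF : HasMaximalInequality F) {f : L1pLinf μ}
    (h : ∀ ε : ℝ, 0 < ε →
      ∃ g ∈ auCauchySubmodule F, excess μ ε (f - g : L1pLinf μ) ≤ ENNReal.ofReal ε) :
    f ∈ auCauchySubmodule F := fun δ hδ => by
  refine ENNReal.tendsto_nhds_zero.2 fun η hη => ?_
  obtain ⟨ε, hε, h_maximal⟩ :=
    hF.exists_measure_le (δ := δ / 3) (by positivity) (ENNReal.half_pos hη.ne')
  obtain ⟨g, hg, hfg⟩ := h ε hε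
  filter_upwards [ENNReal.tendsto_nhds_zero.1 (hg (δ / 3) (by positivity)) _
    (ENNReal.half_pos hη.ne')] with K hK
  refine le_trans (measure_mono_ae ?_) ((measure_union_le _ _).trans
    ((add_le_add (h_maximal (f - g) hfg) hK).trans_eq (ENNReal.add_halves η)))
  filter_upwards [ae_all_iff.2 fun k => L1pLinf.coeFn_sub (F k f) (F k g)]
    with x hx ⟨k, hk, l, hl, hkl⟩
  change (∃ k, _) ∨ (∃ k ≥ K, ∃ l ≥ K, _)
  by_contra! h_not
  have h_le : ∀ k, |F k f x - F k g x| ≤ δ / 3 := fun k => by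
    rw [← hx, ← map_sub]
    exact h_not.1 k
  linarith [abs_sub_le (F k f x) (F k g x) (F l f x), abs_sub_le (F k g x) (F l g x) (F l f x),
    abs_sub_comm (F l g x) (F l f x), h_le k, h_le l, h_not.2 k hk l hl]

end BanachPrinciple

section LTwo

variable {μ : Measure Ω} {S : Module.End ℝ (L1pLinf μ)}

lemma memL1pLinf_of_eLpNorm_two_ne_top {f : Ω →ₘ[μ] ℝ} (hf : eLpNorm f 2 μ ≠ ∞) :
    MemL1pLinf μ f :=
  memL1pLinf_iff_excess_ne_top.2 ⟨1, zero_le_one, ne_top_of_le_ne_top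
    (ENNReal.mul_ne_top ENNReal.ofReal_ne_top (ENNReal.pow_ne_top hf))
    (excess_le_ofReal_inv_mul_eLpNorm_sq one_pos f)⟩

/-- The inclusion of `L²(μ)` into `L¹(μ) + L^∞(μ)`. -/
def lpTwoInclusion (μ : Measure Ω) : Lp ℝ 2 μ →ₗ[ℝ] L1pLinf μ where
  toFun f := ⟨f, mem_L1pLinf.2 (memL1pLinf_of_eLpNorm_two_ne_top (Lp.eLpNorm_ne_top f))⟩
  map_add' _ _ := rfl
  map_smul' _ _ := rfl

namespace IsPosContraction

lemma two_mul_mul_apply_sub_sq_le (hS : IsPosContraction S) {f q : L1pLinf μ}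
    (hq : ∀ᵐ x ∂μ, q x = f x ^ 2) (a : ℝ) : ∀ᵐ x ∂μ, 2 * a * S f x - a ^ 2 ≤ S q x := by
  have h_le : (2 * a) • f ≤ q + a ^ 2 • 1 := by
    refine L1pLinf.coeFn_le.2 ?_
    filter_upwards [hq, L1pLinf.coeFn_smul (2 * a) f, L1pLinf.coeFn_add q (a ^ 2 • 1),
      L1pLinf.coeFn_smul (a ^ 2) 1, L1pLinf.coeFn_one (μ := μ)] with x hx h_f h_add h_a h_one
    rw [h_f, h_add, h_a, h_one, hx]
    nlinarith [sq_nonneg (a - f x)]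
  have h_apply : (2 * a) • S f ≤ S q + a ^ 2 • 1 :=
    calc (2 * a) • S f = S ((2 * a) • f) := (map_smul ..).symm
      _ ≤ S (q + a ^ 2 • 1) := monotone_of_end_nonneg hS.nonneg h_le
      _ = S q + a ^ 2 • S 1 := by rw [map_add, map_smul]
      _ ≤ S q + a ^ 2 • 1 :=
        add_le_add_right (smul_le_smul_of_nonneg_left hS.apply_one_le (sq_nonneg a)) _
  filter_upwards [L1pLinf.coeFn_le.1 h_apply, L1pLinf.coeFn_smul (2 * a) (S f),
    L1pLinf.coeFn_add (S q) (a ^ 2 • 1), L1pLinf.coeFn_smul (a ^ 2) 1, L1pLinf.coeFn_one (μ := μ)]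
    with x hx h_f h_add h_a h_one
  rw [h_f, h_add, h_a, h_one] at hx
  linarith

-- The Cauchy–Schwarz inequality `(S f)² ≤ S (f²)`: optimise `2 a S f - a² ≤ S (f²)` over `a`.
lemma sq_apply_le (hS : IsPosContraction S) {f q : L1pLinf μ} (hq : ∀ᵐ x ∂μ, q x = f x ^ 2) :
    ∀ᵐ x ∂μ, S f x ^ 2 ≤ S q x := by
  filter_upwards [ae_all_iff.2 fun a : ℚ => hS.two_mul_mul_apply_sub_sq_le hq a] with x hx
  have h_real : 2 * S f x * S f x - S f x ^ 2 ≤ S q x :=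
    Rat.denseRange_cast.induction_on (p := fun a : ℝ => 2 * a * S f x - a ^ 2 ≤ S q x) _
      (isClosed_le (by fun_prop) continuous_const) hx
  linarith

lemma eLpNorm_two_apply_le (hS : IsPosContraction S) {f : L1pLinf μ} (hf : eLpNorm f 2 μ ≠ ∞) :
    eLpNorm (S f) 2 μ ≤ eLpNorm f 2 μ := by
  have h_mul : ∀ᵐ x ∂μ, ((f : Ω →ₘ[μ] ℝ) * f) x = f x ^ 2 := by
    filter_upwards [AEEqFun.coeFn_mul (f : Ω →ₘ[μ] ℝ) f] with x hx
    rw [hx, Pi.mul_apply, sq]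
  have h_norm : eLpNorm ((f : Ω →ₘ[μ] ℝ) * f : Ω →ₘ[μ] ℝ) 1 μ = eLpNorm f 2 μ ^ 2 :=
    (eLpNorm_congr_ae h_mul).trans (eLpNorm_two_sq f).symm
  let q : L1pLinf μ := ⟨(f : Ω →ₘ[μ] ℝ) * f, mem_L1pLinf.2 (memL1pLinf_iff_excess_ne_top.2
    ⟨0, le_rfl, by rw [excess_zero, h_norm]; exact ENNReal.pow_ne_top hf⟩)⟩
  refine (ENNReal.pow_le_pow_left_iff two_ne_zero).1 ?_
  calc eLpNorm (S f) 2 μ ^ 2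
      = eLpNorm (fun x => S f x ^ 2) 1 μ := eLpNorm_two_sq _
    _ ≤ eLpNorm (S q) 1 μ := eLpNorm_mono_ae ((hS.sq_apply_le (q := q) h_mul).mono fun x hx => by
        rw [Real.norm_of_nonneg (sq_nonneg _)]
        exact hx.trans (Real.le_norm_self _))
    _ ≤ eLpNorm q 1 μ := hS.eLpNorm_one_le q
    _ = eLpNorm f 2 μ ^ 2 := h_norm

lemma exists_lpTwoInclusion_eq (hS : IsPosContraction S) (f : Lp ℝ 2 μ) :
    ∃ g : Lp ℝ 2 μ, lpTwoInclusion μ g = S (lpTwoInclusion μ f) ∧ ‖g‖ ≤ ‖f‖ := by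
  have h_le := hS.eLpNorm_two_apply_le (f := lpTwoInclusion μ f) (Lp.eLpNorm_ne_top f)
  refine ⟨⟨S (lpTwoInclusion μ f), Lp.mem_Lp_iff_eLpNorm_lt_top.2
    (h_le.trans_lt (Lp.eLpNorm_lt_top f))⟩, rfl, ?_⟩
  exact ENNReal.toReal_mono (Lp.eLpNorm_ne_top f) h_le

end IsPosContraction

lemma eq_of_norm_le_of_inner_sub_eq_zero {E : Type*} [NormedAddCommGroup E]
    [InnerProductSpace ℝ E] {f g : E} (h_norm : ‖g‖ ≤ ‖f‖) (h_inner : inner ℝ (f - g) f = 0) :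
    g = f := by
  refine sub_eq_zero.1 (norm_eq_zero.1 (pow_eq_zero_iff two_ne_zero |>.1
    (le_antisymm ?_ (sq_nonneg _))))
  rw [inner_sub_left, real_inner_self_eq_norm_sq] at h_inner
  rw [norm_sub_sq_real]
  nlinarith [norm_nonneg g]

lemma excess_lpTwoInclusion_le {ε : ℝ} (hε : 0 < ε) {f : Lp ℝ 2 μ} (hf : ‖f‖ ≤ ε) :
    excess μ ε (lpTwoInclusion μ f) ≤ ENNReal.ofReal ε :=
  calc excess μ ε (lpTwoInclusion μ f)
      ≤ ENNReal.ofReal ε⁻¹ * eLpNorm f 2 μ ^ 2 := excess_le_ofReal_inv_mul_eLpNorm_sq hε _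
    _ = ENNReal.ofReal (ε⁻¹ * ‖f‖ ^ 2) := by
        rw [ENNReal.ofReal_mul (by positivity), ENNReal.ofReal_pow (norm_nonneg f), Lp.norm_def,
          ENNReal.ofReal_toReal (Lp.eLpNorm_ne_top f)]
    _ ≤ ENNReal.ofReal ε := by
        refine ENNReal.ofReal_le_ofReal ?_
        rw [inv_mul_eq_div, div_le_iff₀ hε]
        nlinarith [norm_nonneg f]

variable {F : ℕ → Module.End ℝ (L1pLinf μ)}

lemma HasMaximalInequality.isClosed_comap_auCauchySubmodule (hF : HasMaximalInequality F) :
    IsClosed ((auCauchySubmodule F).comap (lpTwoInclusion μ) : Set (Lp ℝ 2 μ)) := by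
  refine isClosed_of_closure_subset fun f hf => hF.mem_auCauchySubmodule fun ε hε => ?_
  obtain ⟨g, hg, hfg⟩ := Metric.mem_closure_iff.1 hf ε hε
  refine ⟨lpTwoInclusion μ g, hg, ?_⟩
  rw [← map_sub]
  exact excess_lpTwoInclusion_le hε ((dist_eq_norm f g).symm.trans_le hfg.le)

-- Von Neumann's argument: a vector orthogonal to all the coboundaries `f - T i f` is fixed by the
-- contractions `T i`.
lemma HasMaximalInequality.lpTwoInclusion_mem_auCauchySubmodule (hF : HasMaximalInequality F)
    {ι : Type*} {T : ι → Module.End ℝ (L1pLinf μ)} (hT : ∀ i, IsPosContraction (T i))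
    (h_coboundary : ∀ i f, f - T i f ∈ auCauchySubmodule F)
    (h_fixed : ∀ f, (∀ i, T i f = f) → f ∈ auCauchySubmodule F) (f : Lp ℝ 2 μ) :
    lpTwoInclusion μ f ∈ auCauchySubmodule F := by
  set V := (auCauchySubmodule F).comap (lpTwoInclusion μ)
  have : CompleteSpace V := hF.isClosed_comap_auCauchySubmodule.completeSpace_coe
  suffices V = ⊤ from (this ▸ Submodule.mem_top : f ∈ V)
  rw [← Submodule.orthogonal_eq_bot_iff, Submodule.eq_bot_iff]
  intro g hg
  have hg_fixed (i : ι) : T i (lpTwoInclusion μ g) = lpTwoInclusion μ g := by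
    obtain ⟨g', hg'_eq, hg'_le⟩ := (hT i).exists_lpTwoInclusion_eq g
    have hg' : g - g' ∈ V := by
      rw [Submodule.mem_comap, map_sub, hg'_eq]
      exact h_coboundary i _
    rw [← hg'_eq, eq_of_norm_le_of_inner_sub_eq_zero hg'_le (hg _ hg')]
  exact inner_self_eq_zero.1 (hg g (h_fixed _ hg_fixed))

end LTwo

section Approximation

variable {μ : Measure Ω} {F : ℕ → Module.End ℝ (L1pLinf μ)}

lemma exists_excess_le (f : L1pLinf μ) {ε : ℝ} (hε : 0 < ε) :
    ∃ C ≥ ε, excess μ C f ≤ ENNReal.ofReal ε := by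
  obtain ⟨δ, -, hδ⟩ := memL1pLinf_iff_excess_ne_top.1 (mem_L1pLinf.1 f.2)
  exact ((eventually_ge_atTop ε).and (ENNReal.tendsto_nhds_zero.1
    (tendsto_excess_atTop (L1pLinf.measurable f) hδ) _ (ENNReal.ofReal_pos.2 hε))).exists

lemma eLpNorm_two_sq_le_mul_excess {f g : Ω → ℝ} {C ε : ℝ} (hC : 0 ≤ C)
    (hgC : ∀ᵐ x ∂μ, |g x| ≤ C) (hgf : ∀ᵐ x ∂μ, |g x| ≤ max (|f x| - ε) 0) :
    eLpNorm g 2 μ ^ 2 ≤ ENNReal.ofReal C * excess μ ε f := by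
  rw [eLpNorm_two_sq, ← excess_zero, excess, excess,
    ← lintegral_const_mul' _ _ ENNReal.ofReal_ne_top]
  refine lintegral_mono_ae ?_
  filter_upwards [hgC, hgf] with x hxC hxf
  calc ENNReal.ofReal (|g x ^ 2| - 0)
      = ENNReal.ofReal (|g x| * |g x|) := by rw [sub_zero, abs_pow, sq]
    _ ≤ ENNReal.ofReal (C * max (|f x| - ε) 0) :=
        ENNReal.ofReal_le_ofReal (mul_le_mul hxC hxf (abs_nonneg _) hC)
    _ = ENNReal.ofReal C * ENNReal.ofReal (|f x| - ε) := by
        rw [ENNReal.ofReal_mul hC, ENNReal.ofReal_max, ENNReal.ofReal_zero, max_zero]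

lemma exists_lpTwo_excess_sub_le {f : L1pLinf μ} (hf : MemRmu μ f) {ε : ℝ} (hε : 0 < ε) :
    ∃ g : Lp ℝ 2 μ, excess μ ε (f - lpTwoInclusion μ g : L1pLinf μ) ≤ ENNReal.ofReal ε := by
  obtain ⟨C, hεC, hC⟩ := exists_excess_le f hε
  set g : Ω →ₘ[μ] ℝ := clip C f - clip ε f
  have hg : ∀ᵐ x ∂μ, g x = max (-C) (min C (f x)) - max (-ε) (min ε (f x)) := by
    filter_upwards [coeFn_clip C f, coeFn_clip ε f, AEEqFun.coeFn_sub (clip C f) (clip ε f)]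
      with x h_C h_ε h_sub
    rw [h_sub, Pi.sub_apply, h_C, h_ε]
  have hg_sq : eLpNorm g 2 μ ^ 2 ≤ ENNReal.ofReal C * excess μ ε f :=
    eLpNorm_two_sq_le_mul_excess (hε.le.trans hεC) (hg.mono fun x hx => by grind)
      (hg.mono fun x hx => by grind)
  have hg_lt_top : eLpNorm g 2 μ < ∞ := (ENNReal.pow_lt_top_iff.1 (hg_sq.trans_lt
    (ENNReal.mul_lt_top ENNReal.ofReal_lt_top
      (memRmu_iff_excess_ne_top.1 hf ε hε).lt_top))).resolve_right two_ne_zero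
  refine ⟨⟨g, Lp.mem_Lp_iff_eLpNorm_lt_top.2 hg_lt_top⟩, (excess_le_of_ae ?_).trans hC⟩
  filter_upwards [hg, AEEqFun.coeFn_sub (f : Ω →ₘ[μ] ℝ) g] with x hx h_sub
  change |((f : Ω →ₘ[μ] ℝ) - g) x| - ε ≤ _
  rw [h_sub, Pi.sub_apply, hx]
  grind

lemma exists_bounded_eLpNorm_sub_le (f : L1pLinf μ) {ε : ℝ} (hε : 0 < ε) :
    ∃ (C : ℝ) (g : L1pLinf μ), 0 ≤ C ∧ (∀ᵐ x ∂μ, |g x| ≤ C) ∧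
      eLpNorm (f - g : L1pLinf μ) 1 μ ≤ ENNReal.ofReal ε := by
  obtain ⟨C, hεC, hC⟩ := exists_excess_le f hε
  have hC_nonneg : 0 ≤ C := hε.le.trans hεC
  have h_clip : ∀ᵐ x ∂μ, |clip C (f : Ω →ₘ[μ] ℝ) x| ≤ C := abs_clip_le hC_nonneg _
  let g : L1pLinf μ := ⟨clip C f, L1pLinf.mem_of_bounded hC_nonneg h_clip⟩
  have hfg : eLpNorm (f - g : L1pLinf μ) 1 μ = excess μ C f := eLpNorm_sub_clip hC_nonneg _
  exact ⟨C, g, hC_nonneg, h_clip, hfg.trans_le hC⟩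

namespace HasMaximalInequality

lemma sub_apply_mem_auCauchySubmodule (hF : HasMaximalInequality F) {T : Module.End ℝ (L1pLinf μ)}
    (hT : IsPosContraction T) (h_bounded : ∀ (g : L1pLinf μ) (C : ℝ), 0 ≤ C →
      (∀ᵐ x ∂μ, |g x| ≤ C) → g - T g ∈ auCauchySubmodule F) (f : L1pLinf μ) :
    f - T f ∈ auCauchySubmodule F := by
  refine hF.mem_auCauchySubmodule fun ε hε => ?_
  obtain ⟨C, g, hC, hgC, hfg⟩ := exists_bounded_eLpNorm_sub_le f (half_pos hε)
  refine ⟨g - T g, h_bounded g C hC hgC, (excess_anti hε.le _).trans ?_⟩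
  calc excess μ 0 (f - T f - (g - T g) : L1pLinf μ)
      = eLpNorm (f - g - T (f - g) : L1pLinf μ) 1 μ := by
        rw [excess_zero, map_sub, sub_sub_sub_comm]
    _ ≤ eLpNorm (f - g : L1pLinf μ) 1 μ + eLpNorm (T (f - g)) 1 μ := L1pLinf.eLpNorm_sub_le _ _
    _ ≤ ENNReal.ofReal (ε / 2) + ENNReal.ofReal (ε / 2) :=
        add_le_add hfg ((hT.eLpNorm_one_le _).trans hfg)
    _ = ENNReal.ofReal ε := by rw [← ENNReal.ofReal_add (by positivity) (by positivity), add_halves]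

lemma mem_auCauchySubmodule_of_memRmu (hF : HasMaximalInequality F)
    (h : ∀ g : Lp ℝ 2 μ, lpTwoInclusion μ g ∈ auCauchySubmodule F) {f : L1pLinf μ}
    (hf : MemRmu μ f) : f ∈ auCauchySubmodule F :=
  hF.mem_auCauchySubmodule fun _ hε =>
    have ⟨g, hg⟩ := exists_lpTwo_excess_sub_le hf hε
    ⟨lpTwoInclusion μ g, h g, hg⟩

end HasMaximalInequality

end Approximation

section MultiparameterAverage

/-- The multiparameter average `∏ i, (1 + t i + ⋯ + t i ^ (n i - 1)) / n i`. -/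
noncomputable def multiPowAvg {A ι : Type*} [CommRing A] [Algebra ℝ A] [Fintype ι] (n : ι → ℕ)
    (t : ι → A) : A :=
  ∏ i, powAvg (n i) (t i)

variable {A ι : Type*} [CommRing A] [Algebra ℝ A] [Fintype ι]

lemma multiPowAvg_eq_sum [DecidableEq ι] (n : ι → ℕ) (t : ι → A) :
    multiPowAvg n t = (∏ i, (n i : ℝ))⁻¹ •
      ∑ k ∈ Fintype.piFinset fun i => Finset.range (n i), ∏ i, t i ^ k i := by
  simp only [multiPowAvg, powAvg]
  rw [Finset.prod_smul, Finset.prod_univ_sum, Finset.prod_inv_distrib]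

lemma multiPowAvg_mul_one_sub [DecidableEq ι] (n : ι → ℕ) (t : ι → A) (i : ι) :
    multiPowAvg n t * (1 - t i) =
      (n i : ℝ)⁻¹ • ((∏ j ∈ Finset.univ.erase i, powAvg (n j) (t j)) * (1 - t i ^ n i)) := by
  rw [multiPowAvg, ← Finset.prod_erase_mul _ _ (Finset.mem_univ i), powAvg, mul_assoc,
    smul_mul_assoc, geom_sum_mul_neg, mul_smul_comm]

variable [PartialOrder A] [IsOrderedRing A] [IsOrderedModule ℝ A]

lemma powAvg_le_smul_powAvg {a : A} (ha : 0 ≤ a) {n N : ℕ} {c : ℝ} (hn : n ≠ 0) (hnN : n ≤ N)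
    (hN : N ≤ c * n) : powAvg n a ≤ c • powAvg N a := by
  have hn_pos : (0 : ℝ) < n := Nat.cast_pos.2 (Nat.pos_of_ne_zero hn)
  have hN_pos : (0 : ℝ) < N := hn_pos.trans_le (Nat.cast_le.2 hnN)
  rw [powAvg, powAvg, smul_smul]
  refine smul_le_smul ?_ (Finset.sum_le_sum_of_subset_of_nonneg
    (Finset.range_subset_range.2 hnN) fun k _ _ => pow_nonneg ha k)
    (by positivity) (Finset.sum_nonneg fun k _ => pow_nonneg ha k)
  rwa [← div_eq_mul_inv, inv_eq_one_div, div_le_div_iff₀ hn_pos hN_pos, one_mul]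

lemma multiPowAvg_le_smul_multiPowAvg {t : ι → A} (ht : ∀ i, 0 ≤ t i) {n : ι → ℕ} {N : ℕ} {c : ℝ}
    (hn : ∀ i, n i ≠ 0) (hnN : ∀ i, n i ≤ N) (hN : ∀ i, N ≤ c * n i) :
    multiPowAvg n t ≤ c ^ Fintype.card ι • multiPowAvg (fun _ => N) t :=
  calc multiPowAvg n t
      ≤ ∏ i, c • powAvg N (t i) := Finset.prod_le_prod (fun i _ => powAvg_nonneg (ht i) _)
        fun i _ => powAvg_le_smul_powAvg (ht i) (hn i) (hnN i) (hN i)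
    _ = c ^ Fintype.card ι • multiPowAvg (fun _ => N) t := by
        rw [Finset.prod_smul, Finset.prod_const, Finset.card_univ, multiPowAvg]

end MultiparameterAverage

section CommutingContractions

lemma map_powAvg {A B : Type*} [Ring A] [Algebra ℝ A] [Ring B] [Algebra ℝ B] (ρ : A →ₐ[ℝ] B)
    (n : ℕ) (a : A) : ρ (powAvg n a) = powAvg n (ρ a) := by
  simp only [powAvg, map_smul, map_sum, map_pow]

instance subalgebra_isOrderedModule {R : Type*} [Ring R] [Algebra ℝ R] [PartialOrder R]
    [IsOrderedRing R] [IsOrderedModule ℝ R] (S : Subalgebra ℝ R) : IsOrderedModule ℝ S :=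
  .of_smul_nonneg fun c hc (a : S) ha => (smul_nonneg hc ha : (0 : R) ≤ c • (a : R))

variable {μ : Measure Ω} {A : Type*} [CommRing A] [Algebra ℝ A]
  {ρ : A →ₐ[ℝ] Module.End ℝ (L1pLinf μ)}

lemma isPosContraction_map_prod {ι : Type*} {s : Finset ι} {a : ι → A}
    (ha : ∀ i ∈ s, IsPosContraction (ρ (a i))) : IsPosContraction (ρ (∏ i ∈ s, a i)) :=
  ((posContractions μ).comap ρ).prod_mem ha

lemma isPosContraction_map_powAvg {a : A} (ha : IsPosContraction (ρ a)) (n : ℕ) :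
    IsPosContraction (ρ (powAvg n a)) := by
  rw [map_powAvg]
  exact ha.powAvg n

lemma isPosContraction_map_brunelSum {a : A} (ha : IsPosContraction (ρ a)) (M : ℕ) :
    IsPosContraction (ρ (brunelSum M a)) := by
  have := ha.sum_smul_pow (fun k => brunelCoeff_nonneg k 1) (sum_brunelCoeff_one_le_one M)
  simpa [brunelSum] using this

variable {ι : Type*} [Fintype ι] {t : ι → A}

lemma isPosContraction_map_multiPowAvg (ht : ∀ i, IsPosContraction (ρ (t i))) (n : ι → ℕ) :
    IsPosContraction (ρ (multiPowAvg n t)) :=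
  isPosContraction_map_prod fun i _ => isPosContraction_map_powAvg (ht i) _

section MaximalInequality

variable [PartialOrder A] [IsOrderedRing A] [IsOrderedModule ℝ A]

lemma exists_map_multiPowAvg_le (hρ : ∀ a b, ρ a ≤ ρ b ↔ a ≤ b)
    (ht : ∀ i, IsPosContraction (ρ (t i))) :
    ∃ C : ℝ, 0 ≤ C ∧ ∀ M, ∃ U, IsPosContraction U ∧ ∀ n ≤ M, n ≠ 0 → ∃ N,
      ρ (multiPowAvg (fun _ => n) t) ≤ C • powAvg N U := by
  obtain ⟨C, N, hC, h⟩ := exists_prod_powAvg_le (Q := (posContractions μ).comap ρ)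
    (fun a ha => (hρ 0 a).1 (by rw [map_zero]; exact IsPosContraction.nonneg ha))
    (fun M a ha => isPosContraction_map_brunelSum ha M) ht
  refine ⟨C, hC, fun M => ?_⟩
  obtain ⟨U, hU, h⟩ := h M
  refine ⟨ρ U, hU, fun n hnM hn => ⟨N n, ?_⟩⟩
  rw [← map_powAvg, ← map_smul, hρ]
  exact h n hnM hn

lemma hasMaximalInequality_map_multiPowAvg (hρ : ∀ a b, ρ a ≤ ρ b ↔ a ≤ b)
    (ht : ∀ i, IsPosContraction (ρ (t i))) {n : ℕ → ι → ℕ} {N : ℕ → ℕ} {c : ℝ} (hc : 0 < c)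
    (hn : ∀ k i, n k i ≠ 0) (hN : ∀ k, N k ≠ 0) (h_le : ∀ k i, n k i ≤ N k)
    (h_sector : ∀ k i, N k ≤ c * n k i) :
    HasMaximalInequality fun k => ρ (multiPowAvg (n k) t) := by
  have t_nonneg (i : ι) : 0 ≤ t i := (hρ 0 (t i)).1 (by rw [map_zero]; exact (ht i).nonneg)
  obtain ⟨C, hC, h⟩ := exists_map_multiPowAvg_le hρ ht
  refine hasMaximalInequality_of_le_powAvg (C := c ^ Fintype.card ι * (C + 1))
    (fun k => isPosContraction_map_multiPowAvg ht _) (by positivity) fun K => ?_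
  obtain ⟨U, hU, hU_le⟩ := h ((Finset.range K).sup N)
  refine ⟨U, hU, fun k hk => ?_⟩
  obtain ⟨m, hm⟩ := hU_le (N k) (Finset.le_sup (Finset.mem_range.2 hk)) (hN k)
  refine ⟨m, ?_⟩
  calc ρ (multiPowAvg (n k) t)
      ≤ c ^ Fintype.card ι • ρ (multiPowAvg (fun _ => N k) t) := by
        rw [← map_smul, hρ]
        exact multiPowAvg_le_smul_multiPowAvg t_nonneg (hn k) (h_le k) (h_sector k)
    _ ≤ c ^ Fintype.card ι • (C + 1) • powAvg m U := by
        refine smul_le_smul_of_nonneg_left (hm.trans ?_) (by positivity)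
        exact smul_le_smul_of_nonneg_right (by linarith) (hU.powAvg m).nonneg
    _ = _ := smul_smul ..

end MaximalInequality

lemma map_multiPowAvg_apply_of_fixed {n : ι → ℕ} (hn : ∀ i, n i ≠ 0) {f : L1pLinf μ}
    (hf : ∀ i, ρ (t i) f = f) : ρ (multiPowAvg n t) f = f := by
  refine Finset.prod_induction _ (fun a => ρ a f = f)
    (fun a b ha hb => by rw [map_mul, Module.End.mul_apply, hb, ha]) (by rw [map_one]; rfl)
    fun i _ => ?_
  have h_pow (k : ℕ) : (ρ (t i) ^ k) f = f := by
    rw [Module.End.pow_apply]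
    exact Function.iterate_fixed (hf i) k
  rw [map_powAvg, powAvg, LinearMap.smul_apply, LinearMap.sum_apply]
  simp only [h_pow, Finset.sum_const, Finset.card_range]
  rw [← Nat.cast_smul_eq_nsmul ℝ, inv_smul_smul₀ (Nat.cast_ne_zero.2 (hn i))]

lemma abs_map_multiPowAvg_sub_apply_le (ht : ∀ i, IsPosContraction (ρ (t i))) (n : ι → ℕ) (i : ι)
    {g : L1pLinf μ} {C : ℝ} (hC : 0 ≤ C) (hg : ∀ᵐ x ∂μ, |g x| ≤ C) :
    ∀ᵐ x ∂μ, |ρ (multiPowAvg n t) (g - ρ (t i) g) x| ≤ (n i : ℝ)⁻¹ * (C + C) := by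
  classical
  set P : A := ∏ j ∈ Finset.univ.erase i, powAvg (n j) (t j)
  have hP : IsPosContraction (ρ P) :=
    isPosContraction_map_prod fun j _ => isPosContraction_map_powAvg (ht j) _
  have h_telescope : ρ (multiPowAvg n t) (g - ρ (t i) g) =
      (n i : ℝ)⁻¹ • ρ P (g - (ρ (t i) ^ n i) g) := by
    simpa using congrArg (fun a => ρ a g) (multiPowAvg_mul_one_sub n t i)
  have h_sub : ∀ᵐ x ∂μ, |(g - (ρ (t i) ^ n i) g : L1pLinf μ) x| ≤ C + C := by
    filter_upwards [hg, ((ht i).pow (n i)).abs_apply_le_of_abs_le hC hg,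
      L1pLinf.coeFn_sub g ((ρ (t i) ^ n i) g)] with x hx hx' h_sub
    rw [h_sub]
    exact (abs_sub _ _).trans (add_le_add hx hx')
  rw [h_telescope]
  filter_upwards [hP.abs_apply_le_of_abs_le (add_nonneg hC hC) h_sub,
    L1pLinf.coeFn_smul (n i : ℝ)⁻¹ (ρ P (g - (ρ (t i) ^ n i) g))] with x hx h_smul
  rw [h_smul, abs_mul, abs_of_nonneg (by positivity)]
  exact mul_le_mul_of_nonneg_left hx (by positivity)

end CommutingContractions

section SectorConvergence

variable {μ : Measure Ω}

lemma excess_le_of_tendsto {F : ℕ → Ω → ℝ} {f : Ω → ℝ} {δ : ℝ} {c : ℝ≥0∞}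
    (hF : ∀ k, Measurable (F k)) (h_lim : ∀ᵐ x ∂μ, Tendsto (F · x) atTop (𝓝 (f x)))
    (h_le : ∀ k, excess μ δ (F k) ≤ c) : excess μ δ f ≤ c :=
  calc excess μ δ f
      = ∫⁻ x, liminf (fun k => ENNReal.ofReal (|F k x| - δ)) atTop ∂μ :=
        lintegral_congr_ae <| h_lim.mono fun x hx =>
          (ENNReal.tendsto_ofReal (hx.abs.sub_const δ)).liminf_eq.symm
    _ ≤ liminf (fun k => excess μ δ (F k)) atTop := lintegral_liminf_le fun k => by fun_prop
    _ ≤ liminf (fun _ : ℕ => c) atTop := liminf_le_liminf (Eventually.of_forall h_le)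
    _ = c := liminf_const c

lemma exists_memRmu_auTendsto {F : ℕ → Module.End ℝ (L1pLinf μ)}
    (hF : ∀ k, IsPosContraction (F k)) {f : L1pLinf μ} (hf : MemRmu μ f)
    (hfF : f ∈ auCauchySubmodule F) :
    ∃ fhat : Ω →ₘ[μ] ℝ, MemRmu μ fhat ∧ AuTendsto μ atTop (fun k => (F k f : Ω →ₘ[μ] ℝ)) fhat := by
  obtain ⟨fhat, h_au, h_lim⟩ := AuCauchy.exists_auTendsto (F := fun k => (F k f : Ω →ₘ[μ] ℝ)) hfF
  refine ⟨fhat, memRmu_iff_excess_ne_top.2 fun δ hδ => ?_, h_au⟩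
  exact ne_top_of_le_ne_top (memRmu_iff_excess_ne_top.1 hf δ hδ) <|
    excess_le_of_tendsto (fun k => L1pLinf.measurable (F k f)) h_lim
      fun k => (hF k).excess_apply_le hδ.le f

lemma auTendsto_add_atTop_iff_nat {F : ℕ → Ω →ₘ[μ] ℝ} {f : Ω →ₘ[μ] ℝ} (K : ℕ) :
    AuTendsto μ atTop (fun k => F (k + K)) f ↔ AuTendsto μ atTop F f :=
  forall₂_congr fun _ _ => exists_congr fun E => and_congr_right fun _ => and_congr_right fun _ =>
    tendsto_add_atTop_iff_nat (f := fun k => eLpNorm (E.indicator ⇑(F k - f)) ∞ μ) K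

variable {A : Type*} [CommRing A] [Algebra ℝ A] {ρ : A →ₐ[ℝ] Module.End ℝ (L1pLinf μ)}
  {ι : Type*} [Fintype ι] {t : ι → A}

lemma sub_apply_mem_auCauchySubmodule_map_multiPowAvg (ht : ∀ i, IsPosContraction (ρ (t i)))
    {n : ℕ → ι → ℕ} (hF : HasMaximalInequality fun k => ρ (multiPowAvg (n k) t))
    (hn : ∀ i, Tendsto (fun k => n k i) atTop atTop) (i : ι) (f : L1pLinf μ) :
    f - ρ (t i) f ∈ auCauchySubmodule fun k => ρ (multiPowAvg (n k) t) := by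
  refine hF.sub_apply_mem_auCauchySubmodule (ht i) (fun g C hC hg => ?_) f
  refine .of_tendsto_bound (c := fun k => (n k i : ℝ)⁻¹ * (C + C)) ?_
    fun k => abs_map_multiPowAvg_sub_apply_le ht (n k) i hC hg
  have := (tendsto_inv_atTop_nhds_zero_nat (𝕜 := ℝ)).comp (hn i)
  simpa using this.mul_const (C + C)

variable [PartialOrder A] [IsOrderedRing A] [IsOrderedModule ℝ A] {n : ℕ → ι → ℕ} {c : ℝ}

lemma hasMaximalInequality_map_multiPowAvg_of_sector (hρ : ∀ a b, ρ a ≤ ρ b ↔ a ≤ b)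
    (ht : ∀ i, IsPosContraction (ρ (t i))) (hn_ne : ∀ k i, n k i ≠ 0)
    (h_sector : ∀ k i j, n k i ≤ c * n k j) :
    HasMaximalInequality fun k => ρ (multiPowAvg (n k) t) := by
  refine hasMaximalInequality_map_multiPowAvg hρ ht (N := fun k => max 1 (Finset.univ.sup (n k)))
    (c := max 1 c) (by positivity) hn_ne (fun _ => by positivity)
    (fun k i => le_max_of_le_right (Finset.le_sup (Finset.mem_univ i))) fun k i => ?_
  obtain ⟨j, -, hj⟩ := Finset.exists_mem_eq_sup _ ⟨i, Finset.mem_univ i⟩ (n k)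
  have hi : (1 : ℝ) ≤ n k i := Nat.one_le_cast.2 (Nat.one_le_iff_ne_zero.2 (hn_ne k i))
  rw [hj, Nat.cast_max, Nat.cast_one, max_mul_of_nonneg _ _ (by positivity), one_mul]
  exact max_le_max hi (h_sector k j i)

theorem exists_memRmu_auTendsto_map_multiPowAvg (hρ : ∀ a b, ρ a ≤ ρ b ↔ a ≤ b)
    (ht : ∀ i, IsPosContraction (ρ (t i))) (hn_ne : ∀ k i, n k i ≠ 0)
    (hn : ∀ i, Tendsto (fun k => n k i) atTop atTop) (h_sector : ∀ k i j, n k i ≤ c * n k j)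
    {f : L1pLinf μ} (hf : MemRmu μ f) :
    ∃ fhat : Ω →ₘ[μ] ℝ, MemRmu μ fhat ∧
      AuTendsto μ atTop (fun k => (ρ (multiPowAvg (n k) t) f : Ω →ₘ[μ] ℝ)) fhat := by
  have h_maximal := hasMaximalInequality_map_multiPowAvg_of_sector hρ ht hn_ne h_sector
  refine exists_memRmu_auTendsto (fun k => isPosContraction_map_multiPowAvg ht (n k)) hf <|
    h_maximal.mem_auCauchySubmodule_of_memRmu (fun g => ?_) hf
  refine h_maximal.lpTwoInclusion_mem_auCauchySubmodule ht
    (sub_apply_mem_auCauchySubmodule_map_multiPowAvg ht h_maximal hn) (fun u hu => ?_) g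
  change AuCauchy μ fun k => ρ (multiPowAvg (n k) t) u
  simp only [map_multiPowAvg_apply_of_fixed (hn_ne _) hu]
  exact .const u

end SectorConvergence

section OperatorAverages

variable {μ : Measure Ω} {A : Type*} [CommRing A] [Algebra ℝ A]
  {ρ : A →ₐ[ℝ] Module.End ℝ (L1pLinf μ)} {d : ℕ} {t : Fin d → A}
  {T : Fin d → (Ω →ₘ[μ] ℝ) → Ω →ₘ[μ] ℝ} {hT : ∀ i, IsPosDS μ (T i)}

lemma iterComp_eq_map_prod_pow (hρ : ∀ i, ρ (t i) = (hT i).toEnd) (k : Fin d → ℕ)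
    (f : L1pLinf μ) : iterComp T k f = ρ (∏ i, t i ^ k i) f := by
  have h_list (l : List (Fin d)) : ((l.map fun i => (T i)^[k i]).foldr (· ∘ ·) id) f =
      (ρ ((l.map fun i => t i ^ k i).prod) f : Ω →ₘ[μ] ℝ) := by
    induction l with
    | nil => simp
    | cons i l ih =>
      rw [List.map_cons, List.foldr_cons, Function.comp_apply, ih, List.map_cons, List.prod_cons,
        map_mul, Module.End.mul_apply, map_pow, hρ, IsPosDS.coe_toEnd_pow_apply]
  rw [iterComp, List.ofFn_eq_map, h_list, Fin.prod_univ_def]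

lemma multiAvg_eq_map_multiPowAvg (hρ : ∀ i, ρ (t i) = (hT i).toEnd) (n : Fin d → ℕ)
    (f : L1pLinf μ) : multiAvg μ T n f = ρ (multiPowAvg n t) f := by
  simp only [multiAvg, iterComp_eq_map_prod_pow hρ, multiPowAvg_eq_sum, map_smul, map_sum,
    LinearMap.smul_apply, LinearMap.sum_apply, Submodule.coe_smul, Submodule.coe_sum]

end OperatorAverages

open scoped IsMulCommutative in
theorem multiparam_sector_au_Rmu_general (μ : Measure Ω) {d : ℕ}
    (T : Fin d → (Ω →ₘ[μ] ℝ) → (Ω →ₘ[μ] ℝ)) (hT : ∀ i, IsPosDS μ (T i))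
    (hcomm : ∀ i j, ∀ f : Ω →ₘ[μ] ℝ, MemL1pLinf μ f → T i (T j f) = T j (T i f))
    (f : Ω →ₘ[μ] ℝ) (hf : MemRmu μ f)
    (n : ℕ → Fin d → ℕ) (hn : ∀ i, Tendsto (fun k => n k i) atTop atTop)
    (hsec : InSector n) :
    ∃ fhat : Ω →ₘ[μ] ℝ, MemRmu μ fhat ∧
      AuTendsto μ atTop (fun k => multiAvg μ T (n k) f) fhat := by
  let S := Algebra.adjoin ℝ (range fun i => (hT i).toEnd)
  have : IsMulCommutative S := Algebra.isMulCommutative_adjoin ℝ <| by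
    rintro _ ⟨i, rfl⟩ _ ⟨j, rfl⟩
    exact LinearMap.ext fun u => Subtype.ext (hcomm i j u (mem_L1pLinf.1 u.2))
  let t : Fin d → S := fun i => ⟨(hT i).toEnd, Algebra.subset_adjoin (mem_range_self i)⟩
  obtain ⟨K, hK⟩ := eventually_atTop.1 (eventually_all.2 fun i => (hn i).eventually_ne_atTop 0)
  have hn_ne (k : ℕ) : ∀ i, n (k + K) i ≠ 0 := hK _ (Nat.le_add_left K k)
  obtain ⟨c, hc⟩ := hsec
  have h_sector (k : ℕ) (i j : Fin d) : (n (k + K) i : ℝ) ≤ c * n (k + K) j :=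
    (div_le_iff₀ (Nat.cast_pos.2 (Nat.pos_of_ne_zero (hn_ne k j)))).1 (hc _ i j (hn_ne k j))
  obtain ⟨fhat, hfhat, h_au⟩ := exists_memRmu_auTendsto_map_multiPowAvg (ρ := S.val) (t := t)
    (f := ⟨f, mem_L1pLinf.2 hf.1⟩) (fun _ _ => Iff.rfl) (fun i => (hT i).isPosContraction_toEnd)
    hn_ne (fun i => (tendsto_add_atTop_iff_nat K).2 (hn i)) h_sector hf
  refine ⟨fhat, hfhat, (auTendsto_add_atTop_iff_nat K).1 ?_⟩
  have h_avg (m : Fin d → ℕ) := multiAvg_eq_map_multiPowAvg (ρ := S.val) (t := t) (hT := hT)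
    (fun _ => rfl) m ⟨f, mem_L1pLinf.2 hf.1⟩
  simpa only [← h_avg] using h_au

/-- **Commutative case of Theorem 5.6**: for a commuting family of positive
Dunford–Schwartz operators `T₁,…,T_d` on a σ-finite measure space, `f ∈ R_μ`,
and any sequence `n(k) → ∞` remaining in a sector of `ℕ^d`, the averages
`A_{n(k)}(f)` converge almost uniformly to some `f̂ ∈ R_μ`. -/
theorem multiparam_sector_au_Rmu (μ : Measure Ω) [SigmaFinite μ] {d : ℕ}
    (T : Fin d → (Ω →ₘ[μ] ℝ) → (Ω →ₘ[μ] ℝ)) (hT : ∀ i, IsPosDS μ (T i))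
    (hcomm : ∀ i j, ∀ f : Ω →ₘ[μ] ℝ, MemL1pLinf μ f → T i (T j f) = T j (T i f))
    (f : Ω →ₘ[μ] ℝ) (hf : MemRmu μ f)
    (n : ℕ → Fin d → ℕ) (hn : ∀ i, Tendsto (fun k => n k i) atTop atTop)
    (hsec : InSector n) :
    ∃ fhat : Ω →ₘ[μ] ℝ, MemRmu μ fhat ∧
      AuTendsto μ atTop (fun k => multiAvg μ T (n k) f) fhat := by
  exact multiparam_sector_au_Rmu_general μ T hT hcomm f hf n hn hsec
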